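/- Let Q be a finite acyclic quiver, Q' a full connected Dynkin subquiver of Q, β a positive root of Q', and i a vertex with β(i) = 1. For every m ≥ 0, the ℚ-linear span of all m-fold left-to-right products (f₁(ω_{i,1}) ∈ ℋ_β) * ⋯ * (f_m(ω_{i,1}) ∈ ℋ_β) with f₁,…,f_m ∈ ℚ[x] equals the subspace 𝒜_{β,m} of ℋ_{m·β} consisting of all polynomials that depend only on the variables ω_{i,1},…,ω_{i,m} (such polynomials are necessarily symmetric in ω_{i,1},…,ω_{i,m}). -/

import Mathlib

open MvPolynomial
open scoped Classical

/-- A finite quiver with vertex set `Fin n`: a finite type of arrows together with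
head and tail maps. -/
structure FinQuiver (n : ℕ) where
  Arr : Type
  [fintypeArr : Fintype Arr]
  hd : Arr → Fin n
  tl : Arr → Fin n

attribute [instance] FinQuiver.fintypeArr

variable {n : ℕ}

/-- `Q` is acyclic: there is no oriented cycle, i.e. no path
`a₁, …, a_{k+1}` (with `hd aₘ = tl aₘ₊₁`) whose final head equals its initial tail. -/
def FinQuiver.Acyclic (Q : FinQuiver n) : Prop :=
  ∀ (k : ℕ) (c : Fin (k + 1) → Q.Arr),
    (∀ m : Fin k, Q.hd (c m.castSucc) = Q.tl (c m.succ)) →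
    Q.hd (c (Fin.last k)) ≠ Q.tl (c 0)

/-- The Euler form `χ_Q` of the quiver `Q`. -/
def FinQuiver.euler (Q : FinQuiver n) (α β : Fin n → ℕ) : ℤ :=
  ∑ i : Fin n, (α i : ℤ) * β i - ∑ a : Q.Arr, (α (Q.tl a) : ℤ) * β (Q.hd a)

/-- The opposite antisymmetrization `⟨α,β⟩ = χ_Q(β,α) − χ_Q(α,β)`. -/
def FinQuiver.lam (Q : FinQuiver n) (α β : Fin n → ℕ) : ℤ :=
  Q.euler β α - Q.euler α β

/-- The polynomial ring in the variables `ω_{i,j}`, `i ∈ Q₀`, `j ∈ ℕ` (0-indexed). -/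
abbrev PolyQ (n : ℕ) := MvPolynomial (Fin n × ℕ) ℚ

/-- The permutation of the variables at vertex `i` induced by a permutation of `ℕ`. -/
def vertexPerm (i : Fin n) (σ : Equiv.Perm ℕ) : Fin n × ℕ → Fin n × ℕ :=
  fun p => if p.1 = i then (i, σ p.2) else p

/-- `f` is, for each vertex `i`, symmetric in the variables `ω_{i,0},…,ω_{i,γ i − 1}`. -/
def SymmIn (γ : Fin n → ℕ) (f : PolyQ n) : Prop :=
  ∀ (i : Fin n) (σ : Equiv.Perm ℕ),
    (∀ j : ℕ, σ j ≠ j → j < γ i) → rename (vertexPerm i σ) f = f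

lemma vars_smul_subset (c : ℚ) (f : PolyQ n) : (c • f).vars ⊆ f.vars := by
  rw [MvPolynomial.smul_eq_C_mul]
  refine (MvPolynomial.vars_mul _ _).trans ?_
  simp [MvPolynomial.vars_C]

/-- `ℋ_γ`: polynomials using only the variables `ω_{i,j}`, `j < γ i`, which are
symmetric at each vertex.  A `ℚ`-submodule of `PolyQ n`. -/
noncomputable def Hspace (γ : Fin n → ℕ) : Submodule ℚ (PolyQ n) where
  carrier := {f | (∀ p ∈ f.vars, p.2 < γ p.1) ∧ SymmIn γ f}
  add_mem' := by
    rintro f g ⟨hf1, hf2⟩ ⟨hg1, hg2⟩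
    refine ⟨fun p hp => ?_, fun i σ hσ => ?_⟩
    · rcases Finset.mem_union.mp (MvPolynomial.vars_add_subset f g hp) with h | h
      exacts [hf1 p h, hg1 p h]
    · rw [map_add, hf2 i σ hσ, hg2 i σ hσ]
  zero_mem' := by
    refine ⟨fun p hp => ?_, fun i σ hσ => map_zero _⟩
    simp [MvPolynomial.vars_0] at hp
  smul_mem' := by
    rintro c f ⟨hf1, hf2⟩
    refine ⟨fun p hp => hf1 p (vars_smul_subset c f hp), fun i σ hσ => ?_⟩
    rw [map_smul, hf2 i σ hσ]

/-- Polynomials all of whose variables sit at vertex `i`. -/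
noncomputable def onlyVertex (i : Fin n) : Submodule ℚ (PolyQ n) where
  carrier := {f | ∀ p ∈ f.vars, p.1 = i}
  add_mem' := by
    intro f g hf hg p hp
    rcases Finset.mem_union.mp (MvPolynomial.vars_add_subset f g hp) with h | h
    exacts [hf p h, hg p h]
  zero_mem' := by
    intro p hp
    simp [MvPolynomial.vars_0] at hp
  smul_mem' := by
    intro c f hf p hp
    exact hf p (vars_smul_subset c f hp)

/-- `𝒜_{β,m}`: the subspace of `ℋ_{m·β}` of polynomials depending only on the
variables `ω_{i,0},…,ω_{i,m−1}` at the distinguished vertex `i`. -/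
noncomputable def Aspace (β : Fin n → ℕ) (i : Fin n) (m : ℕ) : Submodule ℚ (PolyQ n) :=
  Hspace (fun v => m * β v) ⊓ onlyVertex i

/-- Substitute for the `j`-th variable at vertex `i` the variable `ω_{i,s}` where `s`
is the `j`-th element of `T i` in increasing order. -/
noncomputable def substAlong (T : Fin n → Finset ℕ) : PolyQ n →ₐ[ℚ] PolyQ n :=
  aeval fun p : Fin n × ℕ => X (p.1, ((T p.1).sort (· ≤ ·)).getD p.2 0)

/-- The index set of the Kontsevich–Soibelman localization sum:
for each vertex, a `γ₁ i`-element subset of `{0,…,γ₁ i + γ₂ i − 1}`. -/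
def shuffles (γ₁ γ₂ : Fin n → ℕ) : Finset (Fin n → Finset ℕ) :=
  Fintype.piFinset fun i => (Finset.range (γ₁ i + γ₂ i)).powerset.filter fun s => s.card = γ₁ i

def shuffleCompl (γ₁ γ₂ : Fin n → ℕ) (S : Fin n → Finset ℕ) : Fin n → Finset ℕ :=
  fun i => Finset.range (γ₁ i + γ₂ i) \ S i

/-- The numerator factor attached to the arrow `a`:
`∏_{j' ∈ S̄_{h a}} ∏_{j ∈ S_{t a}} (ω_{h a, j'} − ω_{t a, j})`. -/
noncomputable def arrowFactor (Q : FinQuiver n) (γ₁ γ₂ : Fin n → ℕ)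
    (S : Fin n → Finset ℕ) (a : Q.Arr) : PolyQ n :=
  ∏ j' ∈ shuffleCompl γ₁ γ₂ S (Q.hd a), ∏ j ∈ S (Q.tl a),
    (X (Q.hd a, j') - X (Q.tl a, j))

noncomputable def interactionNum (Q : FinQuiver n) (γ₁ γ₂ : Fin n → ℕ)
    (S : Fin n → Finset ℕ) : PolyQ n :=
  ∏ a : Q.Arr, arrowFactor Q γ₁ γ₂ S a

noncomputable def interactionDen (γ₁ γ₂ : Fin n → ℕ) (S : Fin n → Finset ℕ) : PolyQ n :=
  ∏ i : Fin n, ∏ j' ∈ shuffleCompl γ₁ γ₂ S i, ∏ j ∈ S i, (X (i, j') - X (i, j))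

/-- The Kontsevich–Soibelman localization sum, an element of the field of rational
functions (the fraction field of `PolyQ n`). -/
noncomputable def cohaMulRat (Q : FinQuiver n) (γ₁ γ₂ : Fin n → ℕ) (f₁ f₂ : PolyQ n) :
    FractionRing (PolyQ n) :=
  ∑ S ∈ shuffles γ₁ γ₂,
    algebraMap (PolyQ n) (FractionRing (PolyQ n))
        (substAlong S f₁ * substAlong (shuffleCompl γ₁ γ₂ S) f₂ * interactionNum Q γ₁ γ₂ S) /
      algebraMap (PolyQ n) (FractionRing (PolyQ n)) (interactionDen γ₁ γ₂ S)

/-- The CoHA product `f₁ * f₂`: the unique polynomial representing the localization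
sum (and `0` if the sum were not a polynomial, which never happens). -/
noncomputable def cohaMul (Q : FinQuiver n) (γ₁ γ₂ : Fin n → ℕ) (f₁ f₂ : PolyQ n) : PolyQ n :=
  if h : ∃ P : PolyQ n,
      algebraMap (PolyQ n) (FractionRing (PolyQ n)) P = cohaMulRat Q γ₁ γ₂ f₁ f₂ then
    h.choose
  else 0

/-- Iterated, left-to-right, CoHA product of a list of dimension-vector/polynomial pairs.
Returns the total dimension vector together with the product. -/
noncomputable def cohaProd (Q : FinQuiver n) :
    List ((Fin n → ℕ) × PolyQ n) → (Fin n → ℕ) × PolyQ n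
  | [] => (fun _ => 0, 1)
  | x :: xs => xs.foldl (fun acc y => (acc.1 + y.1, cohaMul Q acc.1 y.1 acc.2 y.2)) x

/-- Left-to-right CoHA product `f 0 * f 1 * ⋯ * f (r−1)` with `f u ∈ ℋ_{γ u}`. -/
noncomputable def cohaProdFin (Q : FinQuiver n) {r : ℕ} (γ : Fin r → Fin n → ℕ)
    (f : Fin r → PolyQ n) : PolyQ n :=
  (cohaProd Q (List.ofFn fun u => (γ u, f u))).2

/-- The quiver with one vertex and no arrows. -/
def A1 : FinQuiver 1 := { Arr := Empty, hd := Empty.elim, tl := Empty.elim }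

/-- `ψ_p = x₁ ^ p ∈ ℋ₁(A₁)`. -/
noncomputable def psi (p : ℕ) : PolyQ 1 := X ((0 : Fin 1), 0) ^ p

def oneDim : Fin 1 → ℕ := fun _ => 1

/-- The simple dimension vector `e_i`. -/
def simpleDim (i : Fin n) : Fin n → ℕ := fun v => if v = i then 1 else 0

/-- A subquiver of `Q`. -/
structure Subquiver (Q : FinQuiver n) where
  verts : Finset (Fin n)
  arrows : Finset Q.Arr
  hd_mem : ∀ a ∈ arrows, Q.hd a ∈ verts
  tl_mem : ∀ a ∈ arrows, Q.tl a ∈ verts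

def Subquiver.Full {Q : FinQuiver n} (Q' : Subquiver Q) : Prop :=
  ∀ a : Q.Arr, Q.hd a ∈ Q'.verts → Q.tl a ∈ Q'.verts → a ∈ Q'.arrows

/-- Adjacency in the underlying undirected graph of a subquiver. -/
def Subquiver.Adj {Q : FinQuiver n} (Q' : Subquiver Q) (x y : Fin n) : Prop :=
  ∃ a ∈ Q'.arrows, (Q.hd a = x ∧ Q.tl a = y) ∨ (Q.hd a = y ∧ Q.tl a = x)

def Subquiver.Connected {Q : FinQuiver n} (Q' : Subquiver Q) : Prop :=
  ∀ x ∈ Q'.verts, ∀ y ∈ Q'.verts, Relation.ReflTransGen Q'.Adj x y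

/-- The Euler form of the subquiver `Q'` (on `ℤ`-valued vectors). -/
def Subquiver.eulerZ {Q : FinQuiver n} (Q' : Subquiver Q) (α β : Fin n → ℤ) : ℤ :=
  ∑ i ∈ Q'.verts, α i * β i - ∑ a ∈ Q'.arrows, α (Q.tl a) * β (Q.hd a)

/-- Positive definiteness of the Tits form of `Q'` on vectors supported on `Q'`. -/
def Subquiver.PosDefTits {Q : FinQuiver n} (Q' : Subquiver Q) : Prop :=
  ∀ β : Fin n → ℤ, (∀ i, i ∉ Q'.verts → β i = 0) → β ≠ 0 → 0 < Q'.eulerZ β β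

/-- A connected full subquiver with positive definite Tits form. -/
def Subquiver.IsDynkin {Q : FinQuiver n} (Q' : Subquiver Q) : Prop :=
  Q'.Connected ∧ Q'.Full ∧ Q'.PosDefTits

/-- A positive root of `Q'`: a nonzero dimension vector supported on `Q'` with
Tits form equal to `1`. -/
def Subquiver.IsPosRoot {Q : FinQuiver n} (Q' : Subquiver Q) (β : Fin n → ℕ) : Prop :=
  (∀ i, i ∉ Q'.verts → β i = 0) ∧ β ≠ 0 ∧
    Q'.eulerZ (fun i => (β i : ℤ)) (fun i => (β i : ℤ)) = 1

/-- A subquiver regarded as a quiver in its own right (on the ambient vertex set). -/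
def Subquiver.toQuiver {Q : FinQuiver n} (Q' : Subquiver Q) : FinQuiver n :=
  { Arr := {a : Q.Arr // a ∈ Q'.arrows}, hd := fun a => Q.hd a.1, tl := fun a => Q.tl a.1 }

/-- An (ordered list) subquiver partition `𝒬• = (Q¹,…,Q^ℓ)`: nonempty connected
subquivers whose vertex sets partition `Q₀`. -/
structure SubqPartition (Q : FinQuiver n) (ℓ : ℕ) where
  part : Fin ℓ → Subquiver Q
  nonempty' : ∀ j, (part j).verts.Nonempty
  connected' : ∀ j, (part j).Connected
  cover : ∀ i : Fin n, ∃! j, i ∈ (part j).verts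

/-- The set `𝒬•₁` of arrows belonging to one of the parts. -/
noncomputable def SubqPartition.arrs {Q : FinQuiver n} {ℓ : ℕ} (P : SubqPartition Q ℓ) : Finset Q.Arr :=
  Finset.univ.biUnion fun j => (P.part j).arrows

/-- The partition is admissible and ordered: every arrow not inside a part goes from a
later part to an earlier part (head before tail). -/
def SubqPartition.Ordered {Q : FinQuiver n} {ℓ : ℕ} (P : SubqPartition Q ℓ) : Prop :=
  ∀ a : Q.Arr, a ∉ P.arrs → ∀ i j : Fin ℓ,
    Q.hd a ∈ (P.part i).verts → Q.tl a ∈ (P.part j).verts → i < j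

/-- Every part is a Dynkin subquiver. -/
def SubqPartition.Dynkin {Q : FinQuiver n} {ℓ : ℕ} (P : SubqPartition Q ℓ) : Prop :=
  ∀ j, (P.part j).IsDynkin

/-- `β : Fin r → (Fin n → ℕ)` is a Reineke-ordered enumeration of `Φ₊(𝒬•)`, with
`blk u` the part to which `β u` belongs: block-monotone, enumerating all positive roots
without repetition, and within each block `u < v → ⟨β u, β v⟩ ≥ 0`. -/
def IsReinekeOrder {Q : FinQuiver n} {ℓ : ℕ} (P : SubqPartition Q ℓ) {r : ℕ}
    (β : Fin r → Fin n → ℕ) (blk : Fin r → Fin ℓ) : Prop :=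
  Monotone blk ∧
  (∀ u, (P.part (blk u)).IsPosRoot (β u)) ∧
  Function.Injective β ∧
  (∀ j (b : Fin n → ℕ), (P.part j).IsPosRoot b → ∃ u, β u = b) ∧
  (∀ u v : Fin r, u < v → blk u = blk v → 0 ≤ Q.lam (β u) (β v))

/-- The identification of the variable `p` with `q`. -/
noncomputable def idn {σ : Type*} (p q r : σ) : σ := if r = p then q else r

lemma sub_dvd_of_rename {σ : Type*} (p q : σ) (f : MvPolynomial σ ℚ)
    (h : rename (idn p q) f = 0) : (X p - X q : MvPolynomial σ ℚ) ∣ f := by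
  have key : (Ideal.Quotient.mkₐ ℚ (Ideal.span {(X p - X q : MvPolynomial σ ℚ)})).comp
      (rename (idn p q)) =
      Ideal.Quotient.mkₐ ℚ (Ideal.span {(X p - X q : MvPolynomial σ ℚ)}) := by
    ext r
    simp only [AlgHom.comp_apply, rename_X, idn]
    split_ifs with hr
    · subst hr
      symm
      simp only [Ideal.Quotient.mkₐ_eq_mk]
      rw [Ideal.Quotient.eq]
      exact Ideal.mem_span_singleton_self _
    · rfl
  have h2 := DFunLike.congr_fun key f
  rw [AlgHom.comp_apply, h, map_zero] at h2
  have h3 : Ideal.Quotient.mk (Ideal.span {(X p - X q : MvPolynomial σ ℚ)}) f = 0 := h2.symm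
  rw [Ideal.Quotient.eq_zero_iff_mem, Ideal.mem_span_singleton] at h3
  exact h3

lemma rename_of_sub_dvd {σ : Type*} (p q : σ) (f : MvPolynomial σ ℚ)
    (h : (X p - X q : MvPolynomial σ ℚ) ∣ f) : rename (idn p q) f = 0 := by
  obtain ⟨g, rfl⟩ := h
  rw [map_mul, map_sub, rename_X, rename_X]
  simp [idn]

lemma X_sub_X_ne_zero {σ : Type*} {p q : σ} (h : p ≠ q) : (X p - X q : MvPolynomial σ ℚ) ≠ 0 := by
  intro h0
  exact h (X_injective (sub_eq_zero.mp h0))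

lemma X_sub_X_prime {σ : Type*} {p q : σ} (h : p ≠ q) : Prime (X p - X q : MvPolynomial σ ℚ) := by
  refine ⟨X_sub_X_ne_zero h, ?_, ?_⟩
  · intro hu
    have h1 := (hu.map (rename (idn p q) : MvPolynomial σ ℚ →ₐ[ℚ] _))
    rw [rename_of_sub_dvd p q _ dvd_rfl] at h1
    exact not_isUnit_zero h1
  · intro a b hab
    have := rename_of_sub_dvd p q _ hab
    rw [map_mul, mul_eq_zero] at this
    exact this.imp (sub_dvd_of_rename _ _ _) (sub_dvd_of_rename _ _ _)

lemma X_sub_X_relPrime {σ : Type*} {p q r s : σ} (h : p ≠ q) (h' : r ≠ s)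
    (h1 : ¬ (p = r ∧ q = s)) (h2 : ¬ (p = s ∧ q = r)) :
    IsRelPrime (X p - X q : MvPolynomial σ ℚ) (X r - X s) := by
  rw [(X_sub_X_prime h).irreducible.isRelPrime_iff_not_dvd]
  intro hd
  have := rename_of_sub_dvd _ _ _ hd
  rw [map_sub, rename_X, rename_X, sub_eq_zero] at this
  have := X_injective this
  unfold idn at this
  split_ifs at this <;> simp_all

lemma prod_sub_dvd {σ ι : Type*} (I : Finset ι) (p q : ι → σ)
    (hpq : ∀ a ∈ I, p a ≠ q a)
    (h1 : ∀ a ∈ I, ∀ b ∈ I, a ≠ b → ¬ (p a = p b ∧ q a = q b))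
    (h2 : ∀ a ∈ I, ∀ b ∈ I, a ≠ b → ¬ (p a = q b ∧ q a = p b))
    (f : MvPolynomial σ ℚ) (hf : ∀ a ∈ I, (X (p a) - X (q a) : MvPolynomial σ ℚ) ∣ f) :
    ∏ a ∈ I, (X (p a) - X (q a) : MvPolynomial σ ℚ) ∣ f := by
  refine Finset.prod_dvd_of_isRelPrime ?_ hf
  intro a ha b hb hab
  exact X_sub_X_relPrime (hpq a ha) (hpq b hb) (h1 a ha b hb hab) (h2 a ha b hb hab)

/-- Vandermonde determinant. -/
noncomputable def vand {K : Type*} [CommRing K] (m : ℕ) (x : Fin m → K) : K :=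
  (Matrix.vandermonde x).det

lemma map_vand {K L : Type*} [CommRing K] [CommRing L] (φ : K →+* L) (m : ℕ) (x : Fin m → K) :
    φ (vand m x) = vand m (fun j => φ (x j)) := by
  simp [vand, Matrix.det_vandermonde, map_prod]

lemma vand_perm {K : Type*} [CommRing K] (m : ℕ) (x : Fin m → K) (σ : Equiv.Perm (Fin m)) :
    vand m (fun j => x (σ j)) = (Equiv.Perm.sign σ : ℤ) * vand m x := by
  unfold vand
  rw [← Matrix.det_permute]
  rfl

lemma vand_ne_zero {K : Type*} [CommRing K] [IsDomain K] (m : ℕ) (x : Fin m → K)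
    (hx : Function.Injective x) : vand m x ≠ 0 :=
  Matrix.det_vandermonde_ne_zero_iff.mpr hx

/-- Alternant determinant. -/
noncomputable def altd {K : Type*} [CommRing K] [Algebra ℚ K] (m : ℕ) (f : Fin m → Polynomial ℚ)
    (x : Fin m → K) : K :=
  (Matrix.of fun u j => Polynomial.aeval (x j) (f u)).det

lemma map_altd {K L : Type*} [CommRing K] [CommRing L] [Algebra ℚ K] [Algebra ℚ L]
    (φ : K →ₐ[ℚ] L) (m : ℕ) (f : Fin m → Polynomial ℚ) (x : Fin m → K) :
    φ (altd m f x) = altd m f (fun j => φ (x j)) := by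
  unfold altd
  rw [AlgHom.map_det]
  congr 1
  ext u j
  simp [Polynomial.aeval_algHom_apply]

lemma altd_perm {K : Type*} [CommRing K] [Algebra ℚ K] (m : ℕ) (f : Fin m → Polynomial ℚ)
    (x : Fin m → K) (σ : Equiv.Perm (Fin m)) :
    altd m f (fun j => x (σ j)) = (Equiv.Perm.sign σ : ℤ) * altd m f x := by
  unfold altd
  rw [← Matrix.det_permute']
  rfl

lemma vand_dvd_altd (m : ℕ) (f : Fin m → Polynomial ℚ) :
    vand m (X : Fin m → MvPolynomial (Fin m) ℚ) ∣ altd m f X := by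
  unfold vand
  rw [Matrix.det_vandermonde, Finset.prod_sigma']
  refine prod_sub_dvd (σ := Fin m) (ι := (_ : Fin m) × Fin m)
    (Finset.univ.sigma fun a => Finset.Ioi a) (fun a => a.2) (fun a => a.1)
    ?_ ?_ ?_ (altd m f X) ?_
  · rintro ⟨a, b⟩ h
    simp at h
    exact h.ne'
  · rintro ⟨a, b⟩ h ⟨c, d⟩ h' hne ⟨h1, h2⟩
    simp at h1 h2
    exact hne (by rw [h1, h2])
  · rintro ⟨a, b⟩ h ⟨c, d⟩ h' hne ⟨h1, h2⟩
    simp at h1 h2 h h'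
    omega
  · rintro ⟨a, b⟩ h
    simp at h
    apply sub_dvd_of_rename
    rw [map_altd]
    unfold altd
    refine Matrix.det_zero_of_column_eq h.ne ?_
    intro u
    simp [idn, h.ne]

/-- The quotient alternant / Vandermonde. -/
noncomputable def schurQ (m : ℕ) (f : Fin m → Polynomial ℚ) : MvPolynomial (Fin m) ℚ :=
  (vand_dvd_altd m f).choose

lemma schurQ_spec (m : ℕ) (f : Fin m → Polynomial ℚ) :
    vand m X * schurQ m f = altd m f X := (vand_dvd_altd m f).choose_spec.symm

lemma schurQ_symm (m : ℕ) (f : Fin m → Polynomial ℚ) (σ : Equiv.Perm (Fin m)) :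
    rename σ (schurQ m f) = schurQ m f := by
  have h := congrArg (rename σ) (schurQ_spec m f)
  rw [map_mul, map_altd] at h
  have h2 := map_vand (rename σ : MvPolynomial (Fin m) ℚ →ₐ[ℚ] _).toRingHom m X
  simp only [AlgHom.toRingHom_eq_coe, RingHom.coe_coe] at h2
  rw [h2] at h
  simp only [rename_X] at h
  rw [vand_perm, altd_perm, ← schurQ_spec, mul_assoc] at h
  have hs : ((Equiv.Perm.sign σ : ℤ) : MvPolynomial (Fin m) ℚ) ≠ 0 := by
    rcases Int.units_eq_one_or (Equiv.Perm.sign σ) with h | h <;> simp [h]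
  exact mul_left_cancel₀ (vand_ne_zero m _ (X_injective)) (mul_left_cancel₀ hs h)

/-- Symmetric polynomials are combinations of the `schurQ`. -/
lemma symm_mem_span (m : ℕ) (g : MvPolynomial (Fin m) ℚ)
    (hg : ∀ σ : Equiv.Perm (Fin m), rename σ g = g) :
    g ∈ Submodule.span ℚ (Set.range (schurQ m)) := by
  set V := vand m (X : Fin m → MvPolynomial (Fin m) ℚ) with hV
  have hanti : ∀ σ : Equiv.Perm (Fin m),
      ((Equiv.Perm.sign σ : ℤ) : MvPolynomial (Fin m) ℚ) * rename σ (V * g) = V * g := by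
    intro σ
    have h2 := map_vand (rename σ : MvPolynomial (Fin m) ℚ →ₐ[ℚ] _).toRingHom m X
    simp only [AlgHom.toRingHom_eq_coe, RingHom.coe_coe] at h2
    rw [map_mul, hg, hV, h2]
    simp only [rename_X]
    rw [vand_perm, ← mul_assoc, ← mul_assoc]
    congr 1
    rw [← Int.cast_mul]
    rcases Int.units_eq_one_or (Equiv.Perm.sign σ) with h | h <;> simp [h]
  have hmono : ∀ (d : Fin m →₀ ℕ), ∑ σ : Equiv.Perm (Fin m),
      ((Equiv.Perm.sign σ : ℤ) : MvPolynomial (Fin m) ℚ) * rename σ (monomial d (1 : ℚ))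
      = V * schurQ m (fun u => Polynomial.X ^ d u) := by
    intro d
    rw [hV, schurQ_spec]
    unfold altd
    rw [← Matrix.det_transpose, Matrix.det_apply']
    refine Finset.sum_congr rfl fun σ _ => ?_
    congr 1
    rw [monomial_eq, map_mul, map_finsuppProd]
    simp only [map_pow, rename_X, map_one, one_mul]
    rw [Finsupp.prod_fintype _ _ (by simp)]
    simp [Matrix.transpose_apply]
  have hsum : ∀ h : MvPolynomial (Fin m) ℚ, ∃ q ∈ Submodule.span ℚ (Set.range (schurQ m)),
      ∑ σ : Equiv.Perm (Fin m),
      ((Equiv.Perm.sign σ : ℤ) : MvPolynomial (Fin m) ℚ) * rename σ h = V * q := by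
    intro h
    induction h using MvPolynomial.induction_on' with
    | monomial d a =>
      refine ⟨a • schurQ m (fun u => Polynomial.X ^ d u),
        Submodule.smul_mem _ _ (Submodule.subset_span ⟨_, rfl⟩), ?_⟩
      rw [mul_smul_comm, ← hmono, Finset.smul_sum]
      refine Finset.sum_congr rfl fun σ _ => ?_
      rw [← mul_smul_comm, ← map_smul, smul_monomial, smul_eq_mul, mul_one]
    | add p q hp hq =>
      obtain ⟨p', hp', hp2⟩ := hp
      obtain ⟨q', hq', hq2⟩ := hq
      refine ⟨p' + q', Submodule.add_mem _ hp' hq', ?_⟩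
      rw [mul_add, ← hp2, ← hq2, ← Finset.sum_add_distrib]
      refine Finset.sum_congr rfl fun σ _ => ?_
      rw [map_add, mul_add]
  obtain ⟨q, hq, hq2⟩ := hsum (V * g)
  rw [Finset.sum_congr rfl (fun σ _ => hanti σ), Finset.sum_const, Finset.card_univ,
    ← mul_smul_comm] at hq2
  have hq3 := mul_left_cancel₀ (vand_ne_zero m _ (X_injective)) hq2
  have hN : (Fintype.card (Equiv.Perm (Fin m)) : ℚ) ≠ 0 := by
    exact_mod_cast Fintype.card_ne_zero
  have : g = (Fintype.card (Equiv.Perm (Fin m)) : ℚ)⁻¹ • q := by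
    rw [← hq3, ← Nat.cast_smul_eq_nsmul ℚ, smul_smul, inv_mul_cancel₀ hN, one_smul]
  rw [this]
  exact Submodule.smul_mem _ _ hq

noncomputable def Dp (i : Fin n) (γ₁ γ₂ : Fin n → ℕ) (S : Fin n → Finset ℕ) : PolyQ n :=
  ∏ v ∈ Finset.univ.erase i, ∏ j' ∈ shuffleCompl γ₁ γ₂ S v, ∏ j ∈ S v, (X (v, j') - X (v, j))

noncomputable def dl (i : Fin n) (N : Fin n → ℕ) : PolyQ n :=
  ∏ v ∈ Finset.univ.erase i, vand (N v) (fun j => (X (v, (j : ℕ)) : PolyQ n))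

noncomputable def Sh (i : Fin n) (γ₁ γ₂ : Fin n → ℕ) (T : Finset ℕ) : Finset (Fin n → Finset ℕ) :=
  (shuffles γ₁ γ₂).filter fun S => S i = T

lemma mem_shuffles {γ₁ γ₂ : Fin n → ℕ} {S : Fin n → Finset ℕ} :
    S ∈ shuffles γ₁ γ₂ ↔ ∀ v, S v ⊆ Finset.range (γ₁ v + γ₂ v) ∧ (S v).card = γ₁ v := by
  simp [shuffles, Fintype.mem_piFinset]

lemma card_compl {γ₁ γ₂ : Fin n → ℕ} {S : Fin n → Finset ℕ} (h : S ∈ shuffles γ₁ γ₂) (v : Fin n) :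
    (shuffleCompl γ₁ γ₂ S v).card = γ₂ v := by
  obtain ⟨h1, h2⟩ := mem_shuffles.mp h v
  rw [shuffleCompl, Finset.card_sdiff_of_subset h1, h2, Finset.card_range]
  omega

lemma X_sub_dvd_vand (v : Fin n) (m : ℕ) (a b : Fin m) (h : a ≠ b) :
    (X (v, (a : ℕ)) - X (v, (b : ℕ)) : PolyQ n) ∣ vand m (fun j => (X (v, (j : ℕ)) : PolyQ n)) := by
  apply sub_dvd_of_rename
  have h2 := map_vand (rename (idn (v, (a : ℕ)) (v, (b : ℕ))) :
    PolyQ n →ₐ[ℚ] PolyQ n).toRingHom m (fun j => (X (v, (j : ℕ)) : PolyQ n))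
  simp only [AlgHom.toRingHom_eq_coe, RingHom.coe_coe] at h2
  rw [h2]
  unfold vand
  refine Matrix.det_zero_of_row_eq h ?_
  funext u
  simp only [Matrix.vandermonde_apply, rename_X]
  have : (v, (b : ℕ)) ≠ (v, (a : ℕ)) := by
    intro hh
    simp at hh
    exact h (Fin.ext hh.symm)
  simp [idn]

lemma Dp_dvd (i : Fin n) {γ₁ γ₂ : Fin n → ℕ} {S : Fin n → Finset ℕ} (hS : S ∈ shuffles γ₁ γ₂) :
    Dp i γ₁ γ₂ S ∣ dl i (fun v => γ₁ v + γ₂ v) := by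
  refine Finset.prod_dvd_prod_of_dvd _ _ fun v _ => ?_
  rw [← Finset.prod_product']
  have hmem : ∀ a ∈ shuffleCompl γ₁ γ₂ S v ×ˢ S v, a.1 < γ₁ v + γ₂ v ∧ a.1 ∉ S v ∧ a.2 ∈ S v
      ∧ a.2 < γ₁ v + γ₂ v := by
    rintro ⟨a, b⟩ h
    simp only [Finset.mem_product, shuffleCompl, Finset.mem_sdiff, Finset.mem_range] at h
    exact ⟨h.1.1, h.1.2, h.2, Finset.mem_range.mp ((mem_shuffles.mp hS v).1 h.2)⟩
  refine prod_sub_dvd (σ := Fin n × ℕ) (ι := ℕ × ℕ) (shuffleCompl γ₁ γ₂ S v ×ˢ S v)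
    (fun a => (v, a.1)) (fun a => (v, a.2)) ?_ ?_ ?_ _ ?_
  · intro a h he
    simp at he
    obtain ⟨_, h1, h2, _⟩ := hmem a h
    exact h1 (he ▸ h2)
  · rintro ⟨a, b⟩ _ ⟨c, d⟩ _ hne ⟨h1, h2⟩
    simp at h1 h2
    exact hne (by rw [h1, h2])
  · intro a h b h' _ ⟨h1, h2⟩
    simp at h1 h2
    exact (hmem a h).2.1 (h1 ▸ (hmem b h').2.2.1)
  · intro a h
    obtain ⟨h0, h1, h2, h3⟩ := hmem a h
    refine X_sub_dvd_vand v (γ₁ v + γ₂ v) ⟨a.1, h0⟩ ⟨a.2, h3⟩ ?_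
    intro he
    simp at he
    exact h1 (he ▸ h2)

lemma dl_ne_zero (i : Fin n) (N : Fin n → ℕ) : dl i N ≠ 0 := by
  refine Finset.prod_ne_zero_iff.mpr fun v _ => vand_ne_zero _ _ ?_
  intro a b h
  have := X_injective h
  simp at this
  exact Fin.ext this

lemma num_hom (Q : FinQuiver n) {γ₁ γ₂ : Fin n → ℕ} {S : Fin n → Finset ℕ}
    (hS : S ∈ shuffles γ₁ γ₂) :
    (interactionNum Q γ₁ γ₂ S).IsHomogeneous (∑ a : Q.Arr, γ₂ (Q.hd a) * γ₁ (Q.tl a)) := by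
  refine IsHomogeneous.prod _ _ _ fun a _ => ?_
  have := IsHomogeneous.prod (shuffleCompl γ₁ γ₂ S (Q.hd a))
    (fun j' => ∏ j ∈ S (Q.tl a), (X (Q.hd a, j') - X (Q.tl a, j) : PolyQ n))
    (fun _ => ∑ j ∈ S (Q.tl a), 1)
    (fun j' _ => IsHomogeneous.prod _ _ _ fun j _ => (isHomogeneous_X _ _).sub (isHomogeneous_X _ _))
  rw [Finset.sum_const, Finset.sum_const, card_compl hS, (mem_shuffles.mp hS _).2] at this
  simpa [arrowFactor] using this

lemma Dp_hom (i : Fin n) {γ₁ γ₂ : Fin n → ℕ} {S : Fin n → Finset ℕ}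
    (hS : S ∈ shuffles γ₁ γ₂) :
    (Dp i γ₁ γ₂ S).IsHomogeneous (∑ v ∈ Finset.univ.erase i, γ₂ v * γ₁ v) := by
  refine IsHomogeneous.prod _ _ _ fun a _ => ?_
  have := IsHomogeneous.prod (shuffleCompl γ₁ γ₂ S a)
    (fun j' => ∏ j ∈ S a, (X (a, j') - X (a, j) : PolyQ n))
    (fun _ => ∑ j ∈ S a, 1)
    (fun j' _ => IsHomogeneous.prod _ _ _ fun j _ => (isHomogeneous_X _ _).sub (isHomogeneous_X _ _))
  rw [Finset.sum_const, Finset.sum_const, card_compl hS, (mem_shuffles.mp hS _).2] at this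
  simpa using this

/-- The action of vertexwise permutations on variables. -/
def actV (σ : Fin n → Equiv.Perm ℕ) (p : Fin n × ℕ) : Fin n × ℕ := (p.1, σ p.1 p.2)

def actS (σ : Fin n → Equiv.Perm ℕ) (S : Fin n → Finset ℕ) : Fin n → Finset ℕ :=
  fun v => (S v).map (σ v).toEmbedding

lemma compl_act {γ₁ γ₂ : Fin n → ℕ} (S : Fin n → Finset ℕ) (σ : Fin n → Equiv.Perm ℕ)
    (hσ : ∀ v j, σ v j < γ₁ v + γ₂ v ↔ j < γ₁ v + γ₂ v) (v : Fin n) :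
    shuffleCompl γ₁ γ₂ (actS σ S) v = (shuffleCompl γ₁ γ₂ S v).map (σ v).toEmbedding := by
  ext j
  obtain ⟨l, rfl⟩ := (σ v).surjective j
  simp [shuffleCompl, actS, hσ]

lemma num_act (Q : FinQuiver n) {γ₁ γ₂ : Fin n → ℕ} (S : Fin n → Finset ℕ)
    (σ : Fin n → Equiv.Perm ℕ) (hσ : ∀ v j, σ v j < γ₁ v + γ₂ v ↔ j < γ₁ v + γ₂ v) :
    rename (actV σ) (interactionNum Q γ₁ γ₂ S) = interactionNum Q γ₁ γ₂ (actS σ S) := by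
  simp only [interactionNum, arrowFactor, map_prod, compl_act S σ hσ]
  simp only [actS, Finset.prod_map, map_sub, rename_X, actV, Equiv.coe_toEmbedding]

lemma Dp_act (i : Fin n) {γ₁ γ₂ : Fin n → ℕ} (S : Fin n → Finset ℕ)
    (σ : Fin n → Equiv.Perm ℕ) (hσ : ∀ v j, σ v j < γ₁ v + γ₂ v ↔ j < γ₁ v + γ₂ v) :
    rename (actV σ) (Dp i γ₁ γ₂ S) = Dp i γ₁ γ₂ (actS σ S) := by
  simp only [Dp, map_prod, compl_act S σ hσ]
  simp only [actS, Finset.prod_map, map_sub, rename_X, actV, Equiv.coe_toEmbedding]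

lemma Sh_act (i : Fin n) {γ₁ γ₂ : Fin n → ℕ} (T : Finset ℕ)
    (σ : Fin n → Equiv.Perm ℕ) (hσ : ∀ v j, σ v j < γ₁ v + γ₂ v ↔ j < γ₁ v + γ₂ v)
    (hi : σ i = 1) {S : Fin n → Finset ℕ} (hS : S ∈ Sh i γ₁ γ₂ T) :
    actS σ S ∈ Sh i γ₁ γ₂ T := by
  rw [Sh, Finset.mem_filter, mem_shuffles] at hS ⊢
  refine ⟨fun v => ⟨?_, ?_⟩, ?_⟩
  · intro j hj
    simp only [actS, Finset.mem_map] at hj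
    obtain ⟨l, hl, rfl⟩ := hj
    rw [Finset.mem_range]
    exact (hσ v l).mpr (Finset.mem_range.mp ((hS.1 v).1 hl))
  · rw [actS, Finset.card_map]
    exact (hS.1 v).2
  · rw [← hS.2]
    ext j
    simp only [actS, hi, Finset.mem_map_equiv]
    rfl

lemma actS_actS (σ τ : Fin n → Equiv.Perm ℕ) (h : ∀ v, σ v * τ v = 1) (S : Fin n → Finset ℕ) :
    actS σ (actS τ S) = S := by
  funext v
  ext j
  have h1 : ∀ l, σ v (τ v l) = l := fun l => by
    rw [← Equiv.Perm.mul_apply, h v, Equiv.Perm.one_apply]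
  have h2 : (τ v).symm ((σ v).symm j) = j := by
    rw [Equiv.symm_apply_eq, Equiv.symm_apply_eq, h1]
  simp [actS, h2]

/-- For each fixed choice at `i`, the partial localization sum is a constant. -/
lemma partial_const (Q : FinQuiver n) (i : Fin n) (γ₁ γ₂ : Fin n → ℕ) (T : Finset ℕ)
    (hdeg : ∑ a : Q.Arr, γ₂ (Q.hd a) * γ₁ (Q.tl a) = ∑ v ∈ Finset.univ.erase i, γ₂ v * γ₁ v) :
    ∃ c : ℚ, ∀ (K : Type) [Field K] [Algebra ℚ K] (φ : PolyQ n →ₐ[ℚ] K),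
      φ (dl i (fun v => γ₁ v + γ₂ v)) ≠ 0 →
      ∑ S ∈ Sh i γ₁ γ₂ T, φ (interactionNum Q γ₁ γ₂ S) / φ (Dp i γ₁ γ₂ S) = algebraMap ℚ K c := by
  set N : Fin n → ℕ := fun v => γ₁ v + γ₂ v with hN
  have hsh : ∀ S ∈ Sh i γ₁ γ₂ T, S ∈ shuffles γ₁ γ₂ := fun S hS => (Finset.mem_filter.mp hS).1
  have hr : ∀ S : Fin n → Finset ℕ, ∃ r : PolyQ n, S ∈ Sh i γ₁ γ₂ T → dl i N = Dp i γ₁ γ₂ S * r := by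
    intro S
    by_cases hS : S ∈ Sh i γ₁ γ₂ T
    · obtain ⟨r, h⟩ := Dp_dvd i (hsh S hS)
      exact ⟨r, fun _ => h⟩
    · exact ⟨0, fun h => absurd h hS⟩
  choose r hr using hr
  set P : PolyQ n := ∑ S ∈ Sh i γ₁ γ₂ T, interactionNum Q γ₁ γ₂ S * r S with hP
  have hφ : ∀ (K : Type) [Field K] [Algebra ℚ K] (φ : PolyQ n →ₐ[ℚ] K), φ (dl i N) ≠ 0 →
      φ P = (∑ S ∈ Sh i γ₁ γ₂ T, φ (interactionNum Q γ₁ γ₂ S) / φ (Dp i γ₁ γ₂ S)) * φ (dl i N) := by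
    intro K _ _ φ h0
    rw [hP, map_sum, Finset.sum_mul]
    refine Finset.sum_congr rfl fun S hS => ?_
    rw [hr S hS, map_mul] at h0
    rw [hr S hS, map_mul, map_mul]
    field_simp [left_ne_zero_of_mul h0]
  -- degree
  have hPdeg : P.totalDegree ≤ (dl i N).totalDegree := by
    refine totalDegree_finsetSum_le fun S hS => ?_
    refine (totalDegree_mul _ _).trans ?_
    have h1 := hr S hS
    have h0 := dl_ne_zero i N
    rw [h1] at h0
    rw [h1, totalDegree_mul_of_isDomain (left_ne_zero_of_mul h0) (right_ne_zero_of_mul h0),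
      (Dp_hom i (hsh S hS)).totalDegree (left_ne_zero_of_mul h0), ← hdeg]
    exact Nat.add_le_add_right (num_hom Q (hsh S hS)).totalDegree_le _
  -- antisymmetry
  have hanti : ∀ (v : Fin n), v ≠ i → ∀ a b : Fin (N v), a ≠ b →
      rename (actV (Function.update 1 v (Equiv.swap (a : ℕ) b))) P = - P := by
    intro v hv a b hab
    set σ : Fin n → Equiv.Perm ℕ := Function.update 1 v (Equiv.swap (a : ℕ) b) with hσd
    have hσi : σ i = 1 := by simp [hσd, Function.update_of_ne hv.symm]
    have hσσ : ∀ w, σ w * σ w = 1 := by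
      intro w
      by_cases hw : w = v
      · subst hw
        simp [hσd]
      · simp [hσd, Function.update_of_ne hw]
    have hσ : ∀ w j, σ w j < γ₁ w + γ₂ w ↔ j < γ₁ w + γ₂ w := by
      intro w j
      by_cases hw : w = v
      · subst hw
        have ha := a.2
        have hb := b.2
        simp only [hN] at ha hb
        simp only [hσd, Function.update_self, Equiv.swap_apply_def]
        split_ifs <;> omega
      · simp [hσd, Function.update_of_ne hw]
    have hdl : rename (actV σ) (dl i N) = - dl i N := by
      have hm : v ∈ Finset.univ.erase i := by simp [hv]
      unfold dl
      rw [map_prod, ← Finset.mul_prod_erase _ _ hm, ← Finset.mul_prod_erase _ _ hm, ← neg_mul]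
      have hgen : ∀ w, rename (actV σ) (vand (N w) fun j => (X (w, (j : ℕ)) : PolyQ n)) =
          vand (N w) (fun j => (X (w, σ w j) : PolyQ n)) := by
        intro w
        have h2 := map_vand (rename (actV σ) : PolyQ n →ₐ[ℚ] PolyQ n).toRingHom (N w)
          (fun j => (X (w, (j : ℕ)) : PolyQ n))
        simp only [AlgHom.toRingHom_eq_coe, RingHom.coe_coe] at h2
        rw [h2]
        simp only [rename_X, actV]
      congr 1
      · rw [hgen]
        have h3 := vand_perm (N v) (fun j => (X (v, (j : ℕ)) : PolyQ n)) (Equiv.swap a b)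
        rw [Equiv.Perm.sign_swap hab] at h3
        have h4 : (fun j : Fin (N v) => (X (v, σ v j) : PolyQ n)) =
            fun j => X (v, ((Equiv.swap a b j : Fin (N v)) : ℕ)) := by
          funext j
          congr 2
          simp only [hσd, Function.update_self, Equiv.swap_apply_def, Fin.ext_iff]
          split_ifs <;> rfl
        rw [h4, h3]
        simp
      · refine Finset.prod_congr rfl fun w hw => ?_
        rw [hgen]
        have : w ≠ v := (Finset.mem_erase.mp hw).1
        simp [hσd, Function.update_of_ne this]
    let φ₀ : PolyQ n →ₐ[ℚ] FractionRing (PolyQ n) := IsScalarTower.toAlgHom ℚ _ _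
    have hinj : Function.Injective φ₀ := IsFractionRing.injective (PolyQ n) (FractionRing (PolyQ n))
    have h0 : φ₀ (dl i N) ≠ 0 := by
      rw [Ne, map_eq_zero_iff _ hinj]
      exact dl_ne_zero i N
    have e1 := hφ _ φ₀ h0
    have e2 := hφ _ (φ₀.comp (rename (actV σ))) (by
      rw [AlgHom.comp_apply, hdl, map_neg]
      exact neg_ne_zero.mpr h0)
    simp only [AlgHom.comp_apply] at e2
    rw [hdl, map_neg, mul_neg] at e2
    apply hinj
    rw [e2, map_neg, e1]
    congr 2
    refine Finset.sum_nbij' (actS σ) (actS σ) (fun S hS => Sh_act i T σ hσ hσi hS)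
      (fun S hS => Sh_act i T σ hσ hσi hS) (fun S _ => actS_actS σ σ hσσ S)
      (fun S _ => actS_actS σ σ hσσ S) (fun S _ => ?_)
    rw [num_act Q S σ hσ, Dp_act i S σ hσ]
  -- divisibility
  have hdvd : dl i N ∣ P := by
    unfold dl vand
    simp only [Matrix.det_vandermonde, Finset.prod_sigma']
    refine prod_sub_dvd (σ := Fin n × ℕ) (ι := (v : Fin n) × (_ : Fin (N v)) × Fin (N v))
      ((Finset.univ.erase i).sigma fun v => Finset.univ.sigma fun a => Finset.Ioi a)
      (fun z => (z.1, (z.2.2 : ℕ))) (fun z => (z.1, (z.2.1 : ℕ))) ?_ ?_ ?_ P ?_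
    · rintro ⟨v, a, b⟩ h he
      simp at h he
      omega
    · rintro ⟨v, a, b⟩ h ⟨w, c, d⟩ h' hne ⟨h1, h2⟩
      simp only [Prod.mk.injEq] at h1 h2
      obtain ⟨rfl, h1⟩ := h1
      obtain ⟨_, h2⟩ := h2
      exact hne (by rw [Fin.ext h1, Fin.ext h2])
    · rintro ⟨v, a, b⟩ h ⟨w, c, d⟩ h' hne ⟨h1, h2⟩
      simp only [Prod.mk.injEq] at h1 h2
      simp at h h'
      obtain ⟨rfl, h1⟩ := h1
      obtain ⟨_, h2⟩ := h2
      omega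
    · rintro ⟨v, a, b⟩ h
      simp only [Finset.mem_sigma, Finset.mem_erase, Finset.mem_univ, and_true, true_and,
        Finset.mem_Ioi] at h
      apply sub_dvd_of_rename
      have hA := hanti v h.1 a b h.2.ne
      have hB := congrArg (rename (idn (v, (b : ℕ)) (v, (a : ℕ)))) hA
      rw [rename_rename, map_neg] at hB
      have hcomp : (idn (v, (b : ℕ)) (v, (a : ℕ))) ∘
          (actV (Function.update 1 v (Equiv.swap (a : ℕ) b))) =
          (idn (v, (b : ℕ)) (v, (a : ℕ))) := by
        funext ⟨w, j⟩
        by_cases hw : w = v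
        · subst hw
          simp only [idn, Function.comp, actV, Function.update_self, Equiv.swap_apply_def,
            Prod.mk.injEq, true_and]
          split_ifs <;> simp_all
        · simp [idn, actV, hw]
      rw [hcomp] at hB
      exact self_eq_neg.mp hB
  obtain ⟨q, hq⟩ := hdvd
  have hqc : ∃ c : ℚ, q = C c := by
    by_cases hq0 : q = 0
    · exact ⟨0, by simp [hq0]⟩
    · rw [hq, totalDegree_mul_of_isDomain (dl_ne_zero i N) hq0] at hPdeg
      exact ⟨_, totalDegree_eq_zero_iff_eq_C.mp (by omega)⟩
  obtain ⟨c, rfl⟩ := hqc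
  refine ⟨c, fun K _ _ φ h0 => ?_⟩
  have e := hφ K φ h0
  rw [hq, map_mul, mul_comm] at e
  rw [← mul_right_cancel₀ h0 e]
  exact φ.commutes c

/-- Number of elements of `A` with residue `b` modulo `r`. -/
def cnt (r : ℕ) (A : Finset ℕ) (b : ℕ) : ℕ := (A.filter fun j => j % r = b).card

lemma cnt_range (k m b : ℕ) (hb : b < k + 1) : cnt (k + 1) (Finset.range (k * m + m)) b = m := by
  have h := Nat.count_modEq_card (k * m + m) (Nat.succ_pos k) b
  rw [Nat.count_eq_card_filter_range] at h
  have e : k * m + m = (k + 1) * m := by ring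
  simp only [Nat.succ_eq_add_one, e, Nat.mul_mod_right, not_lt_zero, if_false, add_zero,
    Nat.mul_div_cancel_left m (Nat.succ_pos k)] at h
  unfold cnt
  rw [e]
  conv_rhs => rw [← h]
  congr 1
  ext j
  simp [Nat.ModEq, Nat.mod_eq_of_lt hb]

lemma cnt_sdiff (r : ℕ) (A B : Finset ℕ) (h : A ⊆ B) (b : ℕ) :
    cnt r A b + cnt r (B \ A) b = cnt r B b := by
  unfold cnt
  rw [← Finset.card_union_of_disjoint, ← Finset.filter_union, Finset.union_sdiff_of_subset h]
  exact Finset.disjoint_filter_filter Finset.disjoint_sdiff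

lemma sum_cnt (r : ℕ) (hr : 0 < r) (A : Finset ℕ) : ∑ b ∈ Finset.range r, cnt r A b = A.card := by
  unfold cnt
  rw [Finset.card_eq_sum_card_fiberwise (f := fun j => j % r) (t := Finset.range r)]
  intro j _
  simpa using Nat.mod_lt j hr

lemma prod_same (r : ℕ) (hr : 0 < r) (A B : Finset ℕ) (ε : ℝ) :
    ∏ j' ∈ A, ∏ j ∈ B, (if j' % r = j % r then ε else 1) =
      ε ^ (∑ b ∈ Finset.range r, cnt r A b * cnt r B b) := by
  have h1 : ∀ j' ∈ A, ∏ j ∈ B, (if j' % r = j % r then ε else 1) = ε ^ (cnt r B (j' % r)) := by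
    intro j' _
    rw [Finset.prod_ite, Finset.prod_const_one, mul_one, Finset.prod_const]
    unfold cnt
    congr 3
    ext j
    exact eq_comm
  rw [Finset.prod_congr rfl h1, Finset.prod_pow_eq_pow_sum]
  congr 1
  rw [← Finset.sum_fiberwise_of_maps_to (s := A) (t := Finset.range r) (g := fun j => j % r)
    (fun j _ => by simpa using Nat.mod_lt j hr)]
  refine Finset.sum_congr rfl fun b _ => ?_
  rw [Finset.sum_congr rfl (g := fun _ => cnt r B b)]
  · rw [Finset.sum_const, smul_eq_mul]
    rfl
  · intro j hj
    rw [(Finset.mem_filter.mp hj).2]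

/-- Regular part of the difference of two specialized variables. -/
noncomputable def wfac (r j' j : ℕ) (ε : ℝ) : ℝ :=
  if j' % r = j % r then (j' : ℝ) - j else ((j' % r : ℕ) : ℝ) - ((j % r : ℕ) : ℝ) + ε * ((j' : ℝ) - j)

noncomputable def xpt (r : ℕ) (ε : ℝ) (p : Fin n × ℕ) : ℝ := ((p.2 % r : ℕ) : ℝ) + ε * p.2

lemma xpt_sub (r : ℕ) (ε : ℝ) (v w : Fin n) (j' j : ℕ) :
    xpt r ε (v, j') - xpt r ε (w, j) = (if j' % r = j % r then ε else 1) * wfac r j' j ε := by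
  unfold xpt wfac
  split_ifs with h
  · simp only [h]
    ring
  · ring

lemma wfac_cont (r j' j : ℕ) : Continuous (wfac r j' j) := by
  unfold wfac
  split_ifs <;> fun_prop

lemma wfac_zero_ne (r j' j : ℕ) (h : j' ≠ j) : wfac r j' j 0 ≠ 0 := by
  unfold wfac
  split_ifs with h1
  · rw [sub_ne_zero]
    exact_mod_cast h
  · rw [zero_mul, add_zero, sub_ne_zero]
    exact_mod_cast h1

lemma prod_xpt (r : ℕ) (hr : 0 < r) (A B : Finset ℕ) (ε : ℝ) (v w : Fin n) :
    ∏ j' ∈ A, ∏ j ∈ B, (xpt r ε (v, j') - xpt r ε (w, j)) =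
      ε ^ (∑ b ∈ Finset.range r, cnt r A b * cnt r B b) * ∏ j' ∈ A, ∏ j ∈ B, wfac r j' j ε := by
  rw [← prod_same r hr, ← Finset.prod_mul_distrib]
  refine Finset.prod_congr rfl fun j' _ => ?_
  rw [← Finset.prod_mul_distrib]
  exact Finset.prod_congr rfl fun j _ => xpt_sub _ _ _ _ _ _

/-- Integer Tits form. -/
def titsQ (Q : FinQuiver n) (f : Fin n → ℕ) : ℤ :=
  ∑ v, (f v : ℤ) * f v - ∑ a : Q.Arr, (f (Q.tl a) : ℤ) * f (Q.hd a)

lemma deg_eq (Q : FinQuiver n) (β : Fin n → ℕ) (i : Fin n) (hi : β i = 1) (h1 : titsQ Q β = 1) :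
    ∑ a : Q.Arr, β (Q.hd a) * β (Q.tl a) = ∑ v ∈ Finset.univ.erase i, β v * β v := by
  unfold titsQ at h1
  rw [← Finset.add_sum_erase _ _ (Finset.mem_univ i), hi] at h1
  zify
  simp only [mul_comm (β (Q.hd _) : ℤ)]
  push_cast at h1
  linarith

lemma exponent_ineq (Q : FinQuiver n) (β : Fin n → ℕ) (i : Fin n) (hi : β i = 1)
    (h1 : titsQ Q β = 1)
    (hpos : ∀ e : Fin n → ℕ, (∀ v, e v ≤ β v) → e ≠ 0 → 1 ≤ titsQ Q e)
    (r : ℕ) (s e : Fin n → ℕ → ℕ) (hse : ∀ v, ∀ b < r, s v b + e v b = β v)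
    (he : ∀ v, ∑ b ∈ Finset.range r, e v b = β v)
    (l b' : ℕ) (hl : l < r) (hb' : b' < r) (hlb : l ≠ b') (v₀ v₁ : Fin n)
    (hel : e v₀ l ≠ 0) (heb : e v₁ b' ≠ 0) :
    (∑ v ∈ Finset.univ.erase i, ∑ b ∈ Finset.range r, e v b * s v b) + 1 ≤
      ∑ a : Q.Arr, ∑ b ∈ Finset.range r, e (Q.hd a) b * s (Q.tl a) b := by
  have hsz : ∀ v, ∀ b ∈ Finset.range r, (s v b : ℤ) = β v - e v b := by
    intro v b hb
    have := hse v b (Finset.mem_range.mp hb)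
    omega
  have hle : (∑ v ∈ Finset.univ.erase i, ∑ b ∈ Finset.range r, e v b * s v b) ≤
      ∑ v, ∑ b ∈ Finset.range r, e v b * s v b :=
    Finset.sum_le_sum_of_subset (Finset.erase_subset _ _)
  have hid : ((∑ v, ∑ b ∈ Finset.range r, e v b * s v b : ℕ) : ℤ) -
      ((∑ a : Q.Arr, ∑ b ∈ Finset.range r, e (Q.hd a) b * s (Q.tl a) b : ℕ) : ℤ) =
      titsQ Q β - ∑ b ∈ Finset.range r, titsQ Q (fun v => e v b) := by
    have hez : ∀ v, ∑ b ∈ Finset.range r, (e v b : ℤ) = β v := by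
      intro v
      exact_mod_cast he v
    have A1 : ((∑ v, ∑ b ∈ Finset.range r, e v b * s v b : ℕ) : ℤ) =
        ∑ v, (β v : ℤ) * β v - ∑ b ∈ Finset.range r, ∑ v, (e v b : ℤ) * e v b := by
      push_cast
      rw [Finset.sum_comm (s := Finset.range r), ← Finset.sum_sub_distrib]
      refine Finset.sum_congr rfl fun v _ => ?_
      conv_rhs => enter [1, 1]; rw [← hez v]
      rw [Finset.sum_mul, ← Finset.sum_sub_distrib]
      refine Finset.sum_congr rfl fun b hb => ?_
      rw [hsz v b hb]
      ring
    have A2 : ((∑ a : Q.Arr, ∑ b ∈ Finset.range r, e (Q.hd a) b * s (Q.tl a) b : ℕ) : ℤ) =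
        ∑ a : Q.Arr, (β (Q.tl a) : ℤ) * β (Q.hd a) -
          ∑ b ∈ Finset.range r, ∑ a : Q.Arr, (e (Q.tl a) b : ℤ) * e (Q.hd a) b := by
      push_cast
      rw [Finset.sum_comm (s := Finset.range r), ← Finset.sum_sub_distrib]
      refine Finset.sum_congr rfl fun v _ => ?_
      conv_rhs => enter [1, 2]; rw [← hez]
      rw [Finset.mul_sum, ← Finset.sum_sub_distrib]
      refine Finset.sum_congr rfl fun b hb => ?_
      rw [hsz _ b hb]
      ring
    rw [A1, A2]
    simp only [titsQ, Finset.sum_sub_distrib]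
    ring
  have hnn : ∀ b ∈ Finset.range r, 0 ≤ titsQ Q (fun v => e v b) := by
    intro b hb
    by_cases h0 : (fun v => e v b) = 0
    · rw [h0]
      simp [titsQ]
    · have := hpos _ (fun v => by have := hse v b (Finset.mem_range.mp hb); omega) h0
      omega
  have hge : 2 ≤ ∑ b ∈ Finset.range r, titsQ Q (fun v => e v b) := by
    have hsub : ({l, b'} : Finset ℕ) ⊆ Finset.range r := by
      intro z hz
      simp at hz
      rcases hz with rfl | rfl <;> simpa
    have := Finset.sum_le_sum_of_subset_of_nonneg hsub (fun b hb _ => hnn b hb)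
    rw [Finset.sum_pair hlb] at this
    have B1 := hpos (fun v => e v l) (fun v => by have := hse v l hl; omega)
      (fun h => hel (congrFun h v₀))
    have B2 := hpos (fun v => e v b') (fun v => by have := hse v b' hb'; omega)
      (fun h => heb (congrFun h v₁))
    omega
  zify at hle ⊢
  push_cast at hid
  linarith

/-- The distinguished shuffle. -/
def S0 (k l : ℕ) (β : Fin n → ℕ) : Fin n → Finset ℕ :=
  fun v => (Finset.range (k * β v + β v)).filter fun j => j % (k + 1) ≠ l

lemma S0_compl (k l : ℕ) (β : Fin n → ℕ) (v : Fin n) :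
    shuffleCompl (fun v => k * β v) β (S0 k l β) v =
      (Finset.range (k * β v + β v)).filter fun j => j % (k + 1) = l := by
  ext j
  simp only [shuffleCompl, S0, Finset.mem_sdiff, Finset.mem_filter, Finset.mem_range]
  tauto

lemma S0_mem (k l : ℕ) (hl : l < k + 1) (β : Fin n → ℕ) (i : Fin n) (hi : β i = 1) :
    S0 k l β ∈ Sh i (fun v => k * β v) β ((Finset.range (k + 1)).erase l) := by
  rw [Sh, Finset.mem_filter, mem_shuffles]
  refine ⟨fun v => ⟨Finset.filter_subset _ _, ?_⟩, ?_⟩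
  · have h1 := Finset.card_filter_add_card_filter_not (s := Finset.range (k * β v + β v))
      (fun j => j % (k + 1) = l)
    have h2 := cnt_range k (β v) l hl
    unfold cnt at h2
    rw [Finset.card_range] at h1
    unfold S0
    simp only [ne_eq] at *
    omega
  · ext j
    simp only [S0, hi, mul_one, Finset.mem_filter, Finset.mem_range, Finset.mem_erase]
    constructor
    · rintro ⟨h1, h2⟩
      rw [Nat.mod_eq_of_lt h1] at h2
      exact ⟨h2, h1⟩
    · rintro ⟨h1, h2⟩
      rw [Nat.mod_eq_of_lt h2]
      exact ⟨h2, h1⟩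

lemma S0_uniq (k l : ℕ) (hl : l < k + 1) (β : Fin n → ℕ) (S : Fin n → Finset ℕ)
    (hS : S ∈ shuffles (fun v => k * β v) β)
    (h : ∀ v, ∀ j ∈ shuffleCompl (fun v => k * β v) β S v, j % (k + 1) = l) :
    S = S0 k l β := by
  funext v
  have h1 : shuffleCompl (fun v => k * β v) β S v ⊆ shuffleCompl (fun v => k * β v) β (S0 k l β) v := by
    intro j hj
    rw [S0_compl, Finset.mem_filter]
    refine ⟨?_, h v j hj⟩
    rw [shuffleCompl, Finset.mem_sdiff] at hj
    exact hj.1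
  have h2 := Finset.eq_of_subset_of_card_le h1 (by
    rw [card_compl hS, S0_compl]
    exact (cnt_range k (β v) l hl).le)
  have h3 := (mem_shuffles.mp hS v).1
  have h4 : S0 k l β v ⊆ Finset.range (k * β v + β v) := Finset.filter_subset _ _
  rw [shuffleCompl, shuffleCompl] at h2
  rw [← Finset.sdiff_sdiff_eq_self h3, ← Finset.sdiff_sdiff_eq_self h4, h2]

lemma eval_num (Q : FinQuiver n) (γ₁ γ₂ : Fin n → ℕ) (S : Fin n → Finset ℕ) (r : ℕ) (hr : 0 < r)
    (ε : ℝ) :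
    (aeval (xpt r ε) : PolyQ n →ₐ[ℚ] ℝ) (interactionNum Q γ₁ γ₂ S) =
      ε ^ (∑ a : Q.Arr, ∑ b ∈ Finset.range r,
        cnt r (shuffleCompl γ₁ γ₂ S (Q.hd a)) b * cnt r (S (Q.tl a)) b) *
      ∏ a : Q.Arr, ∏ j' ∈ shuffleCompl γ₁ γ₂ S (Q.hd a), ∏ j ∈ S (Q.tl a), wfac r j' j ε := by
  simp only [interactionNum, arrowFactor, map_prod, map_sub, aeval_X, prod_xpt r hr,
    Finset.prod_mul_distrib, Finset.prod_pow_eq_pow_sum]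

lemma eval_Dp (i : Fin n) (γ₁ γ₂ : Fin n → ℕ) (S : Fin n → Finset ℕ) (r : ℕ) (hr : 0 < r)
    (ε : ℝ) :
    (aeval (xpt r ε) : PolyQ n →ₐ[ℚ] ℝ) (Dp i γ₁ γ₂ S) =
      ε ^ (∑ v ∈ Finset.univ.erase i, ∑ b ∈ Finset.range r,
        cnt r (shuffleCompl γ₁ γ₂ S v) b * cnt r (S v) b) *
      ∏ v ∈ Finset.univ.erase i, ∏ j' ∈ shuffleCompl γ₁ γ₂ S v, ∏ j ∈ S v, wfac r j' j ε := by
  simp only [Dp, map_prod, map_sub, aeval_X, prod_xpt r hr,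
    Finset.prod_mul_distrib, Finset.prod_pow_eq_pow_sum]

lemma wfac_prod_S0 (k l : ℕ) (hl : l < k + 1) (β : Fin n → ℕ) (v w : Fin n) :
    ∏ j' ∈ shuffleCompl (fun v => k * β v) β (S0 k l β) v, ∏ j ∈ S0 k l β w, wfac (k + 1) j' j 0 =
      (∏ b ∈ (Finset.range (k + 1)).erase l, ((l : ℝ) - b)) ^ (β v * β w) := by
  have h1 : ∀ j' ∈ shuffleCompl (fun v => k * β v) β (S0 k l β) v,
      ∏ j ∈ S0 k l β w, wfac (k + 1) j' j 0 =
      (∏ b ∈ (Finset.range (k + 1)).erase l, ((l : ℝ) - b)) ^ (β w) := by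
    intro j' hj'
    rw [S0_compl, Finset.mem_filter] at hj'
    rw [← Finset.prod_fiberwise_of_maps_to (t := (Finset.range (k + 1)).erase l)
      (g := fun j => j % (k + 1)), ← Finset.prod_pow]
    · refine Finset.prod_congr rfl fun b hb => ?_
      rw [Finset.mem_erase, Finset.mem_range] at hb
      rw [Finset.prod_congr rfl (g := fun _ => ((l : ℝ) - b))]
      · rw [Finset.prod_const]
        congr 1
        rw [← cnt_range k (β w) b hb.2]
        unfold cnt
        congr 1
        ext j
        simp only [S0, Finset.mem_filter]
        constructor
        · rintro ⟨⟨h1, h2⟩, h3⟩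
          exact ⟨h1, h3⟩
        · rintro ⟨h1, h3⟩
          exact ⟨⟨h1, by rw [h3]; exact hb.1⟩, h3⟩
      · intro j hj
        have hj2 := (Finset.mem_filter.mp hj).2
        unfold wfac
        rw [if_neg (by rw [hj'.2, hj2]; exact hb.1.symm), hj'.2, hj2]
        ring
    · intro j hj
      rw [S0, Finset.mem_filter] at hj
      rw [Finset.mem_erase, Finset.mem_range]
      exact ⟨hj.2, Nat.mod_lt _ (Nat.succ_pos k)⟩
  rw [Finset.prod_congr rfl h1, Finset.prod_const, ← pow_mul, mul_comm (β w)]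
  congr 2
  rw [S0_compl]
  exact cnt_range k (β v) l hl

lemma S0_cnt (k l : ℕ) (β : Fin n → ℕ) (v w : Fin n) (b : ℕ) :
    cnt (k + 1) (shuffleCompl (fun v => k * β v) β (S0 k l β) v) b *
      cnt (k + 1) (S0 k l β w) b = 0 := by
  rw [mul_eq_zero]
  by_cases hb : b = l
  · right
    rw [cnt, Finset.card_eq_zero, Finset.filter_eq_empty_iff]
    intro j hj
    rw [S0, Finset.mem_filter] at hj
    rw [hb]
    exact hj.2
  · left
    rw [cnt, Finset.card_eq_zero, Finset.filter_eq_empty_iff, S0_compl]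
    intro j hj h
    rw [Finset.mem_filter] at hj
    exact hb (h.symm.trans hj.2)

open Filter Topology in
lemma term_tendsto (Q : FinQuiver n) (β : Fin n → ℕ) (i : Fin n) (hi : β i = 1)
    (h1 : titsQ Q β = 1)
    (hpos : ∀ e : Fin n → ℕ, (∀ v, e v ≤ β v) → e ≠ 0 → 1 ≤ titsQ Q e)
    (k l : ℕ) (hl : l < k + 1) (S : Fin n → Finset ℕ)
    (hS : S ∈ Sh i (fun v => k * β v) β ((Finset.range (k + 1)).erase l)) :
    Tendsto (fun ε : ℝ =>
      (aeval (xpt (k + 1) ε) : PolyQ n →ₐ[ℚ] ℝ) (interactionNum Q (fun v => k * β v) β S) /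
      (aeval (xpt (k + 1) ε) : PolyQ n →ₐ[ℚ] ℝ) (Dp i (fun v => k * β v) β S))
      (𝓝[≠] 0) (𝓝 (if S = S0 k l β then 1 else 0)) := by
  have hSs : S ∈ shuffles (fun v => k * β v) β := (Finset.mem_filter.mp hS).1
  have hSi : S i = (Finset.range (k + 1)).erase l := (Finset.mem_filter.mp hS).2
  simp only [eval_num Q _ _ S (k + 1) (Nat.succ_pos k), eval_Dp i _ _ S (k + 1) (Nat.succ_pos k)]
  set nS := ∑ a : Q.Arr, ∑ b ∈ Finset.range (k + 1),
        cnt (k + 1) (shuffleCompl (fun v => k * β v) β S (Q.hd a)) b * cnt (k + 1) (S (Q.tl a)) b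
    with hnS
  set dS := ∑ v ∈ Finset.univ.erase i, ∑ b ∈ Finset.range (k + 1),
        cnt (k + 1) (shuffleCompl (fun v => k * β v) β S v) b * cnt (k + 1) (S v) b with hdS
  set WN : ℝ → ℝ := fun ε => ∏ a : Q.Arr, ∏ j' ∈ shuffleCompl (fun v => k * β v) β S (Q.hd a),
    ∏ j ∈ S (Q.tl a), wfac (k + 1) j' j ε with hWN
  set WD : ℝ → ℝ := fun ε => ∏ v ∈ Finset.univ.erase i,
    ∏ j' ∈ shuffleCompl (fun v => k * β v) β S v, ∏ j ∈ S v, wfac (k + 1) j' j ε with hWD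
  have cN : Continuous WN := continuous_finsetProd _ fun a _ => continuous_finsetProd _ fun j' _ =>
    continuous_finsetProd _ fun j _ => wfac_cont _ _ _
  have cD : Continuous WD := continuous_finsetProd _ fun a _ => continuous_finsetProd _ fun j' _ =>
    continuous_finsetProd _ fun j _ => wfac_cont _ _ _
  have hD0 : WD 0 ≠ 0 := by
    refine Finset.prod_ne_zero_iff.mpr fun v _ => Finset.prod_ne_zero_iff.mpr fun j' hj' =>
      Finset.prod_ne_zero_iff.mpr fun j hj => wfac_zero_ne _ _ _ ?_
    rintro rfl
    rw [shuffleCompl, Finset.mem_sdiff] at hj'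
    exact hj'.2 hj
  have hexp : dS ≤ nS ∧ (S ≠ S0 k l β → dS + 1 ≤ nS) ∧ (S = S0 k l β → nS = dS) := by
    have hA : S = S0 k l β → nS = 0 ∧ dS = 0 := by
      intro h
      rw [hnS, hdS, h]
      simp only [S0_cnt, Finset.sum_const_zero, and_self]
    have hB : S ≠ S0 k l β → dS + 1 ≤ nS := by
      intro hne
      have hex : ∃ v, ∃ j ∈ shuffleCompl (fun v => k * β v) β S v, j % (k + 1) ≠ l := by
        by_contra hcon
        push Not at hcon
        exact hne (S0_uniq k l hl β S hSs hcon)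
      obtain ⟨v, j, hj, hjl⟩ := hex
      refine exponent_ineq Q β i hi h1 hpos (k + 1) (fun v b => cnt (k + 1) (S v) b)
        (fun v b => cnt (k + 1) (shuffleCompl (fun v => k * β v) β S v) b) ?_ ?_ l (j % (k + 1)) hl
        (Nat.mod_lt _ (Nat.succ_pos k)) hjl.symm i v ?_ ?_
      · intro w b hb
        show cnt (k + 1) (S w) b + cnt (k + 1) (Finset.range (k * β w + β w) \ S w) b = β w
        rw [cnt_sdiff _ _ _ (mem_shuffles.mp hSs w).1, cnt_range k (β w) b hb]
      · intro w
        rw [sum_cnt _ (Nat.succ_pos k), card_compl hSs]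
      · refine Finset.card_ne_zero_of_mem (a := l) ?_
        rw [Finset.mem_filter, shuffleCompl, hSi, hi, Finset.mem_sdiff]
        refine ⟨⟨?_, ?_⟩, Nat.mod_eq_of_lt hl⟩
        · simpa using hl
        · simp
      · refine Finset.card_ne_zero_of_mem (a := j) ?_
        rw [Finset.mem_filter]
        exact ⟨hj, rfl⟩
    refine ⟨?_, hB, fun h => by rw [(hA h).1, (hA h).2]⟩
    by_cases h : S = S0 k l β
    · rw [(hA h).1, (hA h).2]
    · exact (Nat.le_succ _).trans (hB h)
  have key : Tendsto (fun ε : ℝ => ε ^ (nS - dS) * (WN ε / WD ε)) (𝓝[≠] 0)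
      (𝓝 ((0 : ℝ) ^ (nS - dS) * (WN 0 / WD 0))) := by
    apply Tendsto.mono_left _ nhdsWithin_le_nhds
    exact ((continuous_pow _).tendsto 0).mul ((cN.tendsto 0).div (cD.tendsto 0) hD0)
  have hval : (0 : ℝ) ^ (nS - dS) * (WN 0 / WD 0) = if S = S0 k l β then 1 else 0 := by
    split_ifs with h
    · rw [hexp.2.2 h, Nat.sub_self, pow_zero, one_mul]
      have : WN 0 = WD 0 := by
        rw [hWN, hWD, h]
        simp only [wfac_prod_S0 k l hl, Finset.prod_pow_eq_pow_sum]
        rw [deg_eq Q β i hi h1]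
      rw [this, div_self hD0]
    · rw [zero_pow (by have := hexp.2.1 h; omega), zero_mul]
  rw [← hval]
  refine key.congr' ?_
  filter_upwards [self_mem_nhdsWithin] with ε hε
  have hε : ε ≠ 0 := hε
  rw [mul_div_mul_comm]
  congr 1
  rw [eq_div_iff (pow_ne_zero _ hε), ← pow_add, Nat.sub_add_cancel hexp.1]

open Filter Topology in
/-- The partial localization sums are all equal to `1`. -/
lemma partial_one (Q : FinQuiver n) (β : Fin n → ℕ) (i : Fin n) (hi : β i = 1)
    (h1 : titsQ Q β = 1)
    (hpos : ∀ e : Fin n → ℕ, (∀ v, e v ≤ β v) → e ≠ 0 → 1 ≤ titsQ Q e)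
    (k l : ℕ) (hl : l < k + 1) (K : Type) [Field K] [Algebra ℚ K] (φ : PolyQ n →ₐ[ℚ] K)
    (hφ : φ (dl i (fun v => k * β v + β v)) ≠ 0) :
    ∑ S ∈ Sh i (fun v => k * β v) β ((Finset.range (k + 1)).erase l),
      φ (interactionNum Q (fun v => k * β v) β S) / φ (Dp i (fun v => k * β v) β S) = 1 := by
  obtain ⟨c, hc⟩ := partial_const Q i (fun v => k * β v) β ((Finset.range (k + 1)).erase l) (by
    have := congrArg (fun z => k * z) (deg_eq Q β i hi h1)
    simp only [Finset.mul_sum] at this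
    convert this using 2 <;> ring)
  rw [hc K φ hφ]
  suffices h : (algebraMap ℚ ℝ c) = 1 by
    have : c = 1 := by
      have h2 : algebraMap ℚ ℝ c = algebraMap ℚ ℝ 1 := by rw [h, map_one]
      exact (algebraMap ℚ ℝ).injective h2
    rw [this, map_one]
  have hev : ∀ᶠ ε in 𝓝[≠] (0 : ℝ),
      (aeval (xpt (k + 1) ε) : PolyQ n →ₐ[ℚ] ℝ) (dl i (fun v => k * β v + β v)) ≠ 0 := by
    have hall : ∀ᶠ ε in 𝓝[≠] (0 : ℝ), ∀ (v : Fin n) (a b : Fin (k * β v + β v)), a ≠ b →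
        xpt (k + 1) ε (v, (a : ℕ)) - xpt (k + 1) ε (v, (b : ℕ)) ≠ 0 := by
      rw [eventually_all]
      intro v
      rw [eventually_all]
      intro a
      rw [eventually_all]
      intro b
      by_cases hab : a = b
      · exact Eventually.of_forall fun _ h => absurd hab h
      · have hw : ∀ᶠ ε in 𝓝[≠] (0 : ℝ), wfac (k + 1) a b ε ≠ 0 :=
          nhdsWithin_le_nhds ((wfac_cont (k + 1) a b).continuousAt.eventually_ne
            (wfac_zero_ne _ _ _ (fun h => hab (Fin.ext h))))
        filter_upwards [hw, self_mem_nhdsWithin] with ε h2 h3 _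
        rw [xpt_sub]
        refine mul_ne_zero ?_ h2
        split_ifs
        · exact h3
        · exact one_ne_zero
    filter_upwards [hall] with ε h
    rw [dl, map_prod]
    refine Finset.prod_ne_zero_iff.mpr fun v _ => ?_
    have h2 := map_vand (aeval (xpt (k + 1) ε) : PolyQ n →ₐ[ℚ] ℝ).toRingHom (k * β v + β v)
      (fun j => (X (v, (j : ℕ)) : PolyQ n))
    simp only [AlgHom.toRingHom_eq_coe, RingHom.coe_coe, aeval_X] at h2
    rw [h2]
    refine vand_ne_zero _ _ ?_
    intro a b hab
    by_contra hne
    exact h v a b hne (sub_eq_zero.mpr hab)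
  have hlim : Tendsto (fun ε : ℝ =>
      ∑ S ∈ Sh i (fun v => k * β v) β ((Finset.range (k + 1)).erase l),
      (aeval (xpt (k + 1) ε) : PolyQ n →ₐ[ℚ] ℝ) (interactionNum Q (fun v => k * β v) β S) /
      (aeval (xpt (k + 1) ε) : PolyQ n →ₐ[ℚ] ℝ) (Dp i (fun v => k * β v) β S)) (𝓝[≠] 0)
      (𝓝 (∑ S ∈ Sh i (fun v => k * β v) β ((Finset.range (k + 1)).erase l),
        if S = S0 k l β then 1 else 0)) :=
    tendsto_finsetSum _ fun S hS => term_tendsto Q β i hi h1 hpos k l hl S hS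
  rw [Finset.sum_ite_eq', if_pos (S0_mem k l hl β i hi)] at hlim
  refine tendsto_nhds_unique (f := fun _ : ℝ => algebraMap ℚ ℝ c) (l := 𝓝[≠] (0 : ℝ))
    tendsto_const_nhds (hlim.congr' ?_)
  filter_upwards [hev] with ε h
  exact hc ℝ _ h

lemma sign_prod {K : Type*} [CommRing K] (k l : ℕ) (hl : l ≤ k) :
    ∏ a : Fin k, (if l ≤ (a : ℕ) then (-1 : K) else 1) = (-1) ^ (k + l) := by
  rw [Fin.prod_univ_eq_prod_range (fun a => if l ≤ a then (-1 : K) else 1) k]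
  induction k, hl using Nat.le_induction with
  | base =>
    rw [Finset.prod_congr rfl (g := fun _ => (1 : K))]
    · rw [Finset.prod_const_one, ← two_mul, pow_mul]
      simp
    · intro a ha
      rw [if_neg (by simpa using ha)]
  | succ k hk ih =>
    rw [Finset.prod_range_succ, ih, if_pos hk]
    ring

lemma vand_succAbove {K : Type*} [CommRing K] (k : ℕ) (y : Fin (k + 1) → K) (l : Fin (k + 1)) :
    vand (k + 1) y = (-1) ^ (k + (l : ℕ)) *
      (vand k (fun j => y (l.succAbove j)) * ∏ j : Fin k, (y l - y (l.succAbove j))) := by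
  have hv : ∀ (m : ℕ) (z : Fin m → K),
      vand m z = ∏ a, ∏ b, (if a < b then z b - z a else 1) := by
    intro m z
    rw [vand, Matrix.det_vandermonde]
    refine Finset.prod_congr rfl fun a _ => ?_
    rw [← Finset.prod_filter]
    congr 1
    ext b
    simp
  rw [hv, hv, Fin.prod_univ_succAbove _ l, Fin.prod_univ_succAbove _ l]
  simp only [Fin.prod_univ_succAbove (n := k) _ l, lt_irrefl, if_false, one_mul,
    Finset.prod_mul_distrib, (Fin.strictMono_succAbove l).lt_iff_lt]
  rw [← sign_prod k l (Nat.lt_succ_iff.mp l.2), ← mul_assoc, mul_comm (∏ a : Fin k, ∏ b : Fin k, _),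
    ← mul_assoc]
  congr 1
  rw [← Finset.prod_mul_distrib, ← Finset.prod_mul_distrib]
  refine Finset.prod_congr rfl fun a _ => ?_
  by_cases h : l ≤ a.castSucc
  · have h' : (l : ℕ) ≤ a := h
    rw [Fin.succAbove_of_le_castSucc _ _ h]
    have h1 : l < a.succ := by
      rw [Fin.lt_def, Fin.val_succ]; omega
    rw [if_pos h1, if_neg (not_lt.mpr h1.le), if_pos h']
    ring
  · have h' : ¬ (l : ℕ) ≤ a := h
    have h2 : a.castSucc < l := not_le.mp h
    rw [Fin.succAbove_of_castSucc_lt _ _ h2]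
    rw [if_neg (not_lt.mpr h2.le), if_pos h2, if_neg h']

lemma altd_expand {K : Type*} [CommRing K] [Algebra ℚ K] (k : ℕ) (f : Fin (k + 1) → Polynomial ℚ)
    (y : Fin (k + 1) → K) :
    altd (k + 1) f y = ∑ l : Fin (k + 1), (-1) ^ (k + (l : ℕ)) * Polynomial.aeval (y l) (f (Fin.last k)) *
      altd k (fun u => f u.castSucc) (fun j => y (l.succAbove j)) := by
  unfold altd
  rw [Matrix.det_succ_row _ (Fin.last k)]
  refine Finset.sum_congr rfl fun l _ => ?_
  rw [Fin.val_last, Matrix.of_apply]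
  congr 2
  ext u j
  simp [Matrix.submatrix_apply, Fin.succAbove_last]

/-- The one-vertex shuffle formula for alternants. -/
lemma schur_step {K : Type*} [Field K] [Algebra ℚ K] (k : ℕ) (f : Fin (k + 1) → Polynomial ℚ)
    (y : Fin (k + 1) → K) (hy : Function.Injective y) :
    ∑ l : Fin (k + 1), aeval (fun j => y (l.succAbove j)) (schurQ k (fun u => f u.castSucc)) *
      Polynomial.aeval (y l) (f (Fin.last k)) / ∏ j : Fin k, (y l - y (l.succAbove j)) =
    aeval y (schurQ (k + 1) f) := by
  have hsp : ∀ (m : ℕ) (g : Fin m → Polynomial ℚ) (z : Fin m → K),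
      vand m z * aeval z (schurQ m g) = altd m g z := by
    intro m g z
    have h := congrArg (aeval z : MvPolynomial (Fin m) ℚ →ₐ[ℚ] K) (schurQ_spec m g)
    rw [map_mul, map_altd] at h
    have h2 := map_vand (aeval z : MvPolynomial (Fin m) ℚ →ₐ[ℚ] K).toRingHom m X
    simp only [AlgHom.toRingHom_eq_coe, RingHom.coe_coe] at h2
    rw [h2] at h
    simpa using h
  have hV := vand_ne_zero (k + 1) y hy
  apply mul_left_cancel₀ hV
  rw [hsp, altd_expand, Finset.mul_sum]
  refine Finset.sum_congr rfl fun l _ => ?_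
  have hl := vand_succAbove k y l
  have hd : ∏ j : Fin k, (y l - y (l.succAbove j)) ≠ 0 := by
    refine Finset.prod_ne_zero_iff.mpr fun j _ => sub_ne_zero.mpr fun h => ?_
    exact Fin.succAbove_ne l j (hy h).symm
  rw [hl, ← hsp]
  field_simp

lemma sort_erase (k : ℕ) (l : Fin (k + 1)) (j : Fin k) :
    (((Finset.range (k + 1)).erase (l : ℕ)).sort (· ≤ ·)).getD (j : ℕ) 0 = (l.succAbove j : ℕ) := by
  have hc : ((Finset.range (k + 1)).erase (l : ℕ)).card = k := by
    rw [Finset.card_erase_of_mem (Finset.mem_range.mpr l.2), Finset.card_range]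
    rfl
  have h := Finset.orderEmbOfFin_unique hc (f := fun j => ((l.succAbove j : Fin (k + 1)) : ℕ))
    (fun x => by
      rw [Finset.mem_erase, Finset.mem_range]
      exact ⟨fun h => Fin.succAbove_ne l x (Fin.ext h), (l.succAbove x).2⟩)
    (fun a b hab => Fin.strictMono_succAbove l hab)
  have h2 := congrFun h j
  rw [Finset.orderEmbOfFin_apply] at h2
  rw [h2, List.getD_eq_getElem]
  rfl

lemma sum_shuffles {M : Type*} [AddCommMonoid M] (k : ℕ) (β : Fin n → ℕ) (i : Fin n) (hi : β i = 1)
    (F : (Fin n → Finset ℕ) → M) :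
    ∑ S ∈ shuffles (fun v => k * β v) β, F S =
      ∑ l : Fin (k + 1), ∑ S ∈ Sh i (fun v => k * β v) β ((Finset.range (k + 1)).erase (l : ℕ)), F S := by
  rw [← Finset.sum_biUnion]
  · refine Finset.sum_congr ?_ fun _ _ => rfl
    ext S
    simp only [Finset.mem_biUnion, Finset.mem_univ, true_and, Sh, Finset.mem_filter]
    constructor
    · intro hS
      have hc := card_compl hS i
      rw [hi, Finset.card_eq_one] at hc
      obtain ⟨l, hl⟩ := hc
      have hsub := (mem_shuffles.mp hS i).1
      simp only [shuffleCompl, hi, mul_one] at hl hsub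
      have hlm : l ∈ Finset.range (k + 1) \ S i := by rw [hl]; simp
      refine ⟨⟨l, Finset.mem_range.mp (Finset.mem_sdiff.mp hlm).1⟩, hS, ?_⟩
      have h3 := Finset.sdiff_sdiff_eq_self hsub
      rw [hl, Finset.sdiff_singleton_eq_erase] at h3
      exact h3.symm
    · rintro ⟨l, hS, _⟩
      exact hS
  · intro a _ b _ hab
    rw [Function.onFun, Finset.disjoint_left]
    intro S h1 h2
    have e1 := (Finset.mem_filter.mp h1).2
    have e2 := (Finset.mem_filter.mp h2).2
    rw [e1] at e2
    have : (a : ℕ) ∈ (Finset.range (k + 1)).erase (b : ℕ) := by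
      rw [Finset.mem_erase, Finset.mem_range]
      exact ⟨fun h => hab (Fin.ext h), a.2⟩
    rw [← e2] at this
    simp at this

/-- Embedding of the variables at vertex `i`. -/
noncomputable def emb (i : Fin n) (m : ℕ) : MvPolynomial (Fin m) ℚ →ₐ[ℚ] PolyQ n :=
  rename (fun j : Fin m => (i, (j : ℕ)))

lemma mul_step (Q : FinQuiver n) (β : Fin n → ℕ) (i : Fin n) (hi : β i = 1)
    (h1 : titsQ Q β = 1)
    (hpos : ∀ e : Fin n → ℕ, (∀ v, e v ≤ β v) → e ≠ 0 → 1 ≤ titsQ Q e)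
    (k : ℕ) (f : Fin (k + 1) → Polynomial ℚ) :
    cohaMul Q (fun v => k * β v) β (emb i k (schurQ k (fun u => f u.castSucc)))
      (Polynomial.aeval (X (i, 0) : PolyQ n) (f (Fin.last k))) = emb i (k + 1) (schurQ (k + 1) f) := by
  let φ : PolyQ n →ₐ[ℚ] FractionRing (PolyQ n) := IsScalarTower.toAlgHom ℚ _ _
  have hφ : ∀ p, algebraMap (PolyQ n) (FractionRing (PolyQ n)) p = φ p := fun _ => rfl
  have hinj : Function.Injective φ := IsFractionRing.injective (PolyQ n) (FractionRing (PolyQ n))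
  let y : Fin (k + 1) → FractionRing (PolyQ n) := fun j => φ (X (i, (j : ℕ)))
  have hy : Function.Injective y := by
    intro a b h
    have := X_injective (hinj h)
    simp at this
    exact Fin.ext this
  have hrat : algebraMap (PolyQ n) (FractionRing (PolyQ n)) (emb i (k + 1) (schurQ (k + 1) f)) =
      cohaMulRat Q (fun v => k * β v) β (emb i k (schurQ k (fun u => f u.castSucc)))
      (Polynomial.aeval (X (i, 0) : PolyQ n) (f (Fin.last k))) := by
    have e0 : φ (emb i (k + 1) (schurQ (k + 1) f)) = aeval y (schurQ (k + 1) f) := by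
      rw [← AlgHom.comp_apply]
      congr 1
      ext j
      simp [emb, y]
    rw [hφ, e0, ← schur_step k f y hy, cohaMulRat, sum_shuffles k β i hi]
    refine Finset.sum_congr rfl fun l _ => ?_
    have hone := partial_one Q β i hi h1 hpos k l l.2 _ φ (by
      rw [Ne, map_eq_zero_iff _ hinj]
      exact dl_ne_zero i _)
    conv_lhs => rw [← mul_one (_ / _), ← hone]
    rw [Finset.mul_sum]
    refine Finset.sum_congr rfl fun S hS => ?_
    have hSi : S i = (Finset.range (k + 1)).erase (l : ℕ) := (Finset.mem_filter.mp hS).2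
    have hCi : shuffleCompl (fun v => k * β v) β S i = {(l : ℕ)} := by
      rw [shuffleCompl, hSi, hi, mul_one]
      ext j
      simp only [Finset.mem_sdiff, Finset.mem_erase, Finset.mem_range, Finset.mem_singleton]
      have := l.2
      omega
    have e1 : φ (substAlong S (emb i k (schurQ k (fun u => f u.castSucc)))) =
        aeval (fun j => y (l.succAbove j)) (schurQ k (fun u => f u.castSucc)) := by
      rw [← AlgHom.comp_apply, ← AlgHom.comp_apply]
      congr 1
      ext j
      simp only [AlgHom.comp_apply, emb, rename_X, substAlong, aeval_X, hSi, sort_erase, y]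
    have e2 : φ (substAlong (shuffleCompl (fun v => k * β v) β S)
        (Polynomial.aeval (X (i, 0) : PolyQ n) (f (Fin.last k)))) =
        Polynomial.aeval (y l) (f (Fin.last k)) := by
      rw [← Polynomial.aeval_algHom_apply, ← Polynomial.aeval_algHom_apply]
      congr 2
      simp only [substAlong, aeval_X, hCi, Finset.sort_singleton, y]
      simp
    have e3 : φ (interactionDen (fun v => k * β v) β S) =
        (∏ j : Fin k, (y l - y (l.succAbove j))) * φ (Dp i (fun v => k * β v) β S) := by
      rw [interactionDen, ← Finset.mul_prod_erase _ _ (Finset.mem_univ i), map_mul]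
      congr 1
      rw [hCi, Finset.prod_singleton, hSi, map_prod]
      have hrange : ∀ g : ℕ → FractionRing (PolyQ n),
          ∏ j ∈ (Finset.range (k + 1)).erase (l : ℕ), g j = ∏ j : Fin k, g (l.succAbove j) := by
        intro g
        symm
        refine Finset.prod_nbij (fun j => ((l.succAbove j : Fin (k + 1)) : ℕ)) ?_ ?_ ?_ ?_
        · intro j _
          rw [Finset.mem_erase, Finset.mem_range]
          exact ⟨fun h => Fin.succAbove_ne l j (Fin.ext h), (l.succAbove j).2⟩
        · intro a _ b _ h
          exact Fin.succAbove_right_injective (Fin.ext h)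
        · intro j hj
          rw [Finset.mem_coe, Finset.mem_erase, Finset.mem_range] at hj
          obtain ⟨a, ha⟩ := Fin.exists_succAbove_eq (x := ⟨j, hj.2⟩) (y := l)
            (fun h => hj.1 (congrArg Fin.val h))
          exact ⟨a, Finset.mem_coe.mpr (Finset.mem_univ _), by simp [ha]⟩
        · intro j _
          rfl
      rw [hrange]
      simp only [map_sub, y]
    rw [hφ, hφ, map_mul, map_mul, e1, e2, e3, mul_div_mul_comm]
  rw [cohaMul, dif_pos ⟨_, hrat⟩]
  apply IsFractionRing.injective (PolyQ n) (FractionRing (PolyQ n))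
  rw [hrat]
  exact Exists.choose_spec (p := fun P : PolyQ n =>
    algebraMap (PolyQ n) (FractionRing (PolyQ n)) P = cohaMulRat Q (fun v => k * β v) β
      (emb i k (schurQ k (fun u => f u.castSucc)))
      (Polynomial.aeval (X (i, 0) : PolyQ n) (f (Fin.last k)))) ⟨_, hrat⟩

lemma schurQ_zero (f : Fin 0 → Polynomial ℚ) : schurQ 0 f = 1 := by
  have h := schurQ_spec 0 f
  simpa [vand, altd] using h

lemma emb_schurQ_one (i : Fin n) (f : Fin 1 → Polynomial ℚ) :
    emb i 1 (schurQ 1 f) = Polynomial.aeval (X (i, 0) : PolyQ n) (f 0) := by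
  have h := schurQ_spec 1 f
  have h2 : schurQ 1 f = Polynomial.aeval (X 0) (f 0) := by
    simpa [vand, altd] using h
  rw [h2, ← Polynomial.aeval_algHom_apply]
  simp [emb]

lemma cohaProd_snoc (Q : FinQuiver n) (L : List ((Fin n → ℕ) × PolyQ n)) (hL : L ≠ [])
    (y : (Fin n → ℕ) × PolyQ n) :
    cohaProd Q (L.concat y) =
      ((cohaProd Q L).1 + y.1, cohaMul Q (cohaProd Q L).1 y.1 (cohaProd Q L).2 y.2) := by
  cases L with
  | nil => exact absurd rfl hL
  | cons x xs => simp [cohaProd, List.concat_eq_append, List.foldl_append]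

lemma prod_eq (Q : FinQuiver n) (β : Fin n → ℕ) (i : Fin n) (hi : β i = 1)
    (h1 : titsQ Q β = 1)
    (hpos : ∀ e : Fin n → ℕ, (∀ v, e v ≤ β v) → e ≠ 0 → 1 ≤ titsQ Q e)
    (m : ℕ) (f : Fin m → Polynomial ℚ) :
    cohaProd Q (List.ofFn fun u => (β, Polynomial.aeval (X (i, 0) : PolyQ n) (f u))) =
      (fun v => m * β v, emb i m (schurQ m f)) := by
  induction m with
  | zero => simp [cohaProd, schurQ_zero]
  | succ k ih =>
    rcases Nat.eq_zero_or_pos k with rfl | hk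
    · simp [cohaProd, emb_schurQ_one]
    · rw [List.ofFn_succ', cohaProd_snoc]
      · rw [ih (fun u => f u.castSucc)]
        refine Prod.ext ?_ ?_
        · funext v
          simp only [Pi.add_apply]
          ring
        · exact mul_step Q β i hi h1 hpos k f
      · intro h
        have := congrArg List.length h
        simp at this
        omega

lemma emb_mem (β : Fin n → ℕ) (i : Fin n) (hi : β i = 1) (m : ℕ) (g : MvPolynomial (Fin m) ℚ)
    (hg : ∀ σ : Equiv.Perm (Fin m), rename σ g = g) : emb i m g ∈ Aspace β i m := by
  have hvars : ∀ p ∈ (emb i m g).vars, ∃ j : Fin m, (i, (j : ℕ)) = p := by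
    intro p hp
    have := vars_rename (fun j : Fin m => (i, (j : ℕ))) g hp
    rw [Finset.mem_image] at this
    obtain ⟨j, _, h⟩ := this
    exact ⟨j, h⟩
  refine ⟨⟨?_, ?_⟩, ?_⟩
  · intro p hp
    obtain ⟨j, rfl⟩ := hvars p hp
    simp [hi]
  · intro v σ hσ
    by_cases hv : v = i
    · subst hv
      simp only [hi, mul_one] at hσ
      have hlt : ∀ j, j < m ↔ σ j < m := by
        intro j
        by_cases h : σ j = j
        · rw [h]
        · exact ⟨fun _ => hσ _ (fun h2 => h (σ.injective h2)), fun _ => hσ j h⟩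
      let τ : Equiv.Perm (Fin m) :=
        { toFun := fun j => ⟨σ j, (hlt j).mp j.2⟩
          invFun := fun j => ⟨σ.symm j, (hlt _).mpr (by simp)⟩
          left_inv := fun j => by simp
          right_inv := fun j => by simp }
      conv_rhs => rw [← hg τ]
      rw [emb, rename_rename, rename_rename]
      congr 2
      funext j
      simp [vertexPerm, τ]
    · rw [emb, rename_rename]
      congr 2
      funext j
      simp [vertexPerm, Ne.symm hv]
  · intro p hp
    obtain ⟨j, rfl⟩ := hvars p hp
    rfl

lemma mem_emb (β : Fin n → ℕ) (i : Fin n) (hi : β i = 1) (m : ℕ) (p : PolyQ n)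
    (hp : p ∈ Aspace β i m) :
    ∃ g : MvPolynomial (Fin m) ℚ, (∀ σ : Equiv.Perm (Fin m), rename σ g = g) ∧ emb i m g = p := by
  obtain ⟨⟨h1, h2⟩, h3⟩ := hp
  have hinj : Function.Injective (fun j : Fin m => (i, (j : ℕ))) := by
    intro a b h
    simp at h
    exact Fin.ext h
  obtain ⟨g, hg⟩ := exists_rename_eq_of_vars_subset_range p (fun j : Fin m => (i, (j : ℕ))) hinj (by
    intro q hq
    have e1 : q.2 < m * β q.1 := h1 q hq
    have e2 : q.1 = i := h3 q hq
    rw [e2, hi, mul_one] at e1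
    exact ⟨⟨q.2, e1⟩, Prod.ext e2.symm rfl⟩)
  refine ⟨g, fun τ => ?_, hg⟩
  apply rename_injective _ hinj
  let σ : Equiv.Perm ℕ := τ.extendDomain (Fin.equivSubtype (n := m))
  have hσ : ∀ j : Fin m, σ j = τ j := by
    intro j
    have := Equiv.Perm.extendDomain_apply_image τ (Fin.equivSubtype (n := m)) j
    simpa [σ] using this
  have hs := h2 i σ (by
    intro j hj
    show j < m * β i
    rw [hi, mul_one]
    by_contra hcon
    exact hj (Equiv.Perm.extendDomain_apply_not_subtype τ (Fin.equivSubtype (n := m)) hcon))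
  rw [hg, ← hs, ← hg, rename_rename, rename_rename]
  congr 2
  funext j
  simp [vertexPerm, hσ]

lemma tits_of_dynkin (Q : FinQuiver n) (Q' : Subquiver Q) (hF : Q'.Full) (f : Fin n → ℕ)
    (hf : ∀ v, v ∉ Q'.verts → f v = 0) :
    titsQ Q f = Q'.eulerZ (fun v => (f v : ℤ)) (fun v => (f v : ℤ)) := by
  unfold titsQ Subquiver.eulerZ
  congr 1
  · symm
    refine Finset.sum_subset (Finset.subset_univ _) fun v _ hv => ?_
    simp [hf v hv]
  · symm
    refine Finset.sum_subset (Finset.subset_univ _) fun a _ ha => ?_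
    by_cases h1 : Q.hd a ∈ Q'.verts
    · by_cases h2 : Q.tl a ∈ Q'.verts
      · exact absurd (hF a h1 h2) ha
      · simp [hf _ h2]
    · simp [hf _ h1]

/-- Let `Q'` be a full connected Dynkin subquiver of the acyclic
quiver `Q`, `β` a positive root of `Q'`, and `i` a vertex with `β i = 1`.  For every
`m ≥ 0`, the `ℚ`-span of all `m`-fold left-to-right products
`(f₁(ω_{i,1}) ∈ ℋ_β) * ⋯ * (f_m(ω_{i,1}) ∈ ℋ_β)`, `f₁,…,f_m ∈ ℚ[x]`, equals the
subspace `𝒜_{β,m}` of `ℋ_{m·β}` of polynomials depending only on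
`ω_{i,1},…,ω_{i,m}`. -/
theorem span_products_eq_Aspace {n : ℕ} (Q : FinQuiver n) (hQ : Q.Acyclic)
    (Q' : Subquiver Q) (hD : Q'.IsDynkin)
    (β : Fin n → ℕ) (hβ : Q'.IsPosRoot β) (i : Fin n) (hi : β i = 1) (m : ℕ) :
    Submodule.span ℚ {g : PolyQ n | ∃ f : Fin m → Polynomial ℚ,
        g = cohaProdFin Q (fun _ => β)
          (fun u => Polynomial.aeval (X (i, 0) : PolyQ n) (f u))} =
      Aspace β i m := by
  have h1 : titsQ Q β = 1 := by
    rw [tits_of_dynkin Q Q' hD.2.1 β hβ.1]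
    exact hβ.2.2
  have hpos : ∀ e : Fin n → ℕ, (∀ v, e v ≤ β v) → e ≠ 0 → 1 ≤ titsQ Q e := by
    intro e he h0
    have hs : ∀ v, v ∉ Q'.verts → e v = 0 := fun v hv => by
      have := he v
      rw [hβ.1 v hv] at this
      omega
    rw [tits_of_dynkin Q Q' hD.2.1 e hs]
    exact hD.2.2 (fun v => (e v : ℤ)) (fun v hv => by simp [hs v hv])
      (fun h => h0 (funext fun v => by
        have := congrFun h v
        simpa using this))
  have hprod : ∀ f : Fin m → Polynomial ℚ, cohaProdFin Q (fun _ => β)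
      (fun u => Polynomial.aeval (X (i, 0) : PolyQ n) (f u)) = emb i m (schurQ m f) := by
    intro f
    unfold cohaProdFin
    rw [prod_eq Q β i hi h1 hpos m f]
  apply le_antisymm
  · refine Submodule.span_le.mpr ?_
    rintro g ⟨f, rfl⟩
    rw [hprod]
    exact emb_mem β i hi m _ (schurQ_symm m f)
  · intro p hp
    obtain ⟨g, hg, rfl⟩ := mem_emb β i hi m p hp
    have h := Submodule.mem_map_of_mem (f := (emb i m).toLinearMap) (symm_mem_span m g hg)
    rw [Submodule.map_span] at h
    refine Submodule.span_mono ?_ h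
    rintro _ ⟨_, ⟨f, rfl⟩, rfl⟩
    exact ⟨f, (hprod f).symm⟩
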